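/- arXiv:1101.1856 — 2 statements merged into one kernel-verified Lean document; each statement's English description precedes it below -/
import Mathlib

section
/- Let X be a one-dimensional Peano continuum. Then X is an absolute neighborhood retract if and only if π₁(X) is finitely generated. -/
open Set

/-- Covering dimension at most `n`. -/
def CovDimLE (X : Type*) [TopologicalSpace X] (n : ℕ) : Prop :=
  ∀ U : Set (Set X), U.Finite → (∀ u ∈ U, IsOpen u) → ⋃₀ U = Set.univ →
    ∃ V : Set (Set X), V.Finite ∧ (∀ v ∈ V, IsOpen v) ∧ ⋃₀ V = Set.univ ∧
      (∀ v ∈ V, ∃ u ∈ U, v ⊆ u) ∧ ∀ x : X, {v ∈ V | x ∈ v}.ncard ≤ n + 1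

/-- Absolute neighborhood retract. -/
def IsANR (X : Type*) [MetricSpace X] : Prop :=
  ∀ (Y : Type) [MetricSpace Y] (Z : Set Y), IsClosed Z →
    ∀ f : C(Z, X), ∃ (V : Set Y) (_ : IsOpen V) (hZV : Z ⊆ V) (g : C(V, X)),
      ∀ (z : Y) (hz : z ∈ Z), g ⟨z, hZV hz⟩ = f ⟨z, hz⟩


open Filter Topology

/-- Absolute neighborhood extensor property of a subset `S` (for metric spaces in `Type`). -/
def ANEOn {X : Type} [TopologicalSpace X] (S : Set X) : Prop :=
  ∀ (Y : Type) [MetricSpace Y] (Z : Set Y) (f : Y → X), IsClosed Z → ContinuousOn f Z →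
    MapsTo f Z S → ∃ (V : Set Y) (g : Y → X), IsOpen V ∧ Z ⊆ V ∧ ContinuousOn g V ∧
      MapsTo g V S ∧ EqOn g f Z

theorem ANEOn.of_open_subset {X : Type} [TopologicalSpace X] {S T : Set X} (hS : ANEOn S)
    (hT : IsOpen T) (hTS : T ⊆ S) : ANEOn T := by
  intro Y _ Z f hZ hf hm
  obtain ⟨V, g, hV, hZV, hg, -, he⟩ := hS Y Z f hZ hf (hm.mono_right hTS)
  refine ⟨V ∩ g ⁻¹' T, g, hg.isOpen_inter_preimage hV hT, fun z hz => ⟨hZV hz, ?_⟩,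
    hg.mono inter_subset_left, fun y hy => hy.2, he⟩
  simpa [he hz] using hm hz

theorem ANEOn.empty {X : Type} [TopologicalSpace X] : ANEOn (∅ : Set X) := by
  intro Y _ Z f hZ hf hm
  refine ⟨∅, f, isOpen_empty, fun z hz => (hm hz).elim, by simp, by simp, fun z hz => (hm hz).elim⟩

theorem ANEOn.union {X : Type} [TopologicalSpace X] {U₁ U₂ : Set X} (h₁ : ANEOn U₁)
    (h₂ : ANEOn U₂) (o₁ : IsOpen U₁) (o₂ : IsOpen U₂) : ANEOn (U₁ ∪ U₂) := by
  classical
  intro Y _ Z f hZ hf hm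
  have c₁ : IsClosed (Z ∩ f ⁻¹' U₂ᶜ) := hf.preimage_isClosed_of_isClosed hZ o₂.isClosed_compl
  have c₂ : IsClosed (Z ∩ f ⁻¹' U₁ᶜ) := hf.preimage_isClosed_of_isClosed hZ o₁.isClosed_compl
  have hd : Disjoint (Z ∩ f ⁻¹' U₂ᶜ) (Z ∩ f ⁻¹' U₁ᶜ) := by
    rw [Set.disjoint_left]
    rintro z ⟨hz, h2⟩ ⟨-, h1⟩
    rcases hm hz with h | h
    · exact h1 h
    · exact h2 h
  obtain ⟨h, h0, h1, -⟩ := exists_continuous_zero_one_of_isClosed c₁ c₂ hd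
  have hh := h.continuous
  have m1 : ∀ z ∈ Z, h z ≤ 1/2 → f z ∈ U₁ := by
    intro z hz hle
    by_contra hc
    have := h1 ⟨hz, hc⟩
    simp only [Pi.one_apply] at this
    linarith
  have m2 : ∀ z ∈ Z, 1/2 ≤ h z → f z ∈ U₂ := by
    intro z hz hle
    by_contra hc
    have := h0 ⟨hz, hc⟩
    simp only [Pi.zero_apply] at this
    linarith
  have cY0 : IsClosed {y | h y = 1/2} := isClosed_eq hh continuous_const
  have cY1 : IsClosed {y | h y ≤ 1/2} := isClosed_le hh continuous_const
  have cY2 : IsClosed {y | 1/2 ≤ h y} := isClosed_le continuous_const hh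
  have cZ0 := hZ.inter cY0
  obtain ⟨V0, f0, oV0, hZV0, cf0, mf0, ef0⟩ :=
    (h₁.of_open_subset (o₁.inter o₂) inter_subset_left) Y (Z ∩ {y | h y = 1/2}) f cZ0
    (hf.mono inter_subset_left) (fun z hz => ⟨m1 z hz.1 hz.2.le, m2 z hz.1 hz.2.ge⟩)
  obtain ⟨N, oN, hZN, hNV⟩ := normal_exists_closure_subset cZ0 oV0 hZV0
  set E := closure N ∩ {y | h y = 1/2} with hE
  have cE : IsClosed E := isClosed_closure.inter cY0
  let f' : Y → X := fun y => if y ∈ Z then f y else f0 y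
  have f'Z : EqOn f' f Z := fun z hz => if_pos hz
  have f'E : EqOn f' f0 E := by
    intro z hz
    by_cases hzZ : z ∈ Z
    · simp only [f', hzZ, if_true]
      exact (ef0 ⟨hzZ, hz.2⟩).symm
    · simp only [f', hzZ, if_false]
  have cf' : ContinuousOn f' (Z ∪ E) :=
    (hf.congr f'Z).union_of_isClosed ((cf0.mono (inter_subset_left.trans hNV)).congr f'E) hZ cE
  have mE : ∀ y ∈ E, f' y ∈ U₁ ∩ U₂ := fun y hy => by
    rw [f'E hy]; exact mf0 (hNV hy.1)
  obtain ⟨V1, g1, oV1, hV1, cg1, mg1, eg1⟩ := h₁ Y (Z ∩ {y | h y ≤ 1/2} ∪ E) f'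
    ((hZ.inter cY1).union cE) (cf'.mono (union_subset_union_left _ inter_subset_left)) (by
      rintro y (hy | hy)
      · rw [f'Z hy.1]; exact m1 y hy.1 hy.2
      · exact (mE y hy).1)
  obtain ⟨V2, g2, oV2, hV2, cg2, mg2, eg2⟩ := h₂ Y (Z ∩ {y | 1/2 ≤ h y} ∪ E) f'
    ((hZ.inter cY2).union cE) (cf'.mono (union_subset_union_left _ inter_subset_left)) (by
      rintro y (hy | hy)
      · rw [f'Z hy.1]; exact m2 y hy.1 hy.2
      · exact (mE y hy).2)
  let V : Set Y := ({y | h y < 1/2} ∩ V1) ∪ ({y | 1/2 < h y} ∩ V2) ∪ (V1 ∩ V2 ∩ N)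
  have oV : IsOpen V :=
    (((isOpen_lt hh continuous_const).inter oV1).union
      ((isOpen_lt continuous_const hh).inter oV2)).union ((oV1.inter oV2).inter oN)
  let g : Y → X := fun y => if h y ≤ 1/2 then g1 y else g2 y
  have V1' : ∀ y ∈ V, h y ≤ 1/2 → y ∈ V1 := by
    rintro y ((⟨_, h⟩ | ⟨h3, h⟩) | ⟨⟨h, _⟩, _⟩) hy
    · exact h
    · simp only [mem_ofPred_eq] at h3; linarith
    · exact h
  have V2' : ∀ y ∈ V, 1/2 ≤ h y → y ∈ V2 := by
    rintro y ((⟨h3, h⟩ | ⟨_, h⟩) | ⟨⟨_, h⟩, _⟩) hy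
    · simp only [mem_ofPred_eq] at h3; linarith
    · exact h
    · exact h
  have gg : ∀ y ∈ V, h y = 1/2 → g1 y = g2 y := by
    rintro y ((⟨h3, _⟩ | ⟨h3, _⟩) | ⟨_, hN⟩) hy
    · simp only [mem_ofPred_eq] at h3; linarith
    · simp only [mem_ofPred_eq] at h3; linarith
    · have : y ∈ E := ⟨subset_closure hN, hy⟩
      rw [eg1 (Or.inr this), eg2 (Or.inr this)]
  have gon1 : EqOn g g1 {y | h y ≤ 1/2} := fun y hy => if_pos hy
  have gon2 : EqOn g g2 (V ∩ {y | 1/2 ≤ h y}) := by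
    intro y hy
    by_cases h' : h y ≤ 1/2
    · simp only [g, h', if_true]; exact gg y hy.1 (le_antisymm h' hy.2)
    · simp only [g, h', if_false]
  refine ⟨V, g, oV, ?_, ?_, ?_, ?_⟩
  · intro z hz
    rcases lt_trichotomy (h z) (1/2) with hlt | heq | hgt
    · exact Or.inl (Or.inl ⟨hlt, hV1 (Or.inl ⟨hz, hlt.le⟩)⟩)
    · exact Or.inr ⟨⟨hV1 (Or.inl ⟨hz, heq.le⟩), hV2 (Or.inl ⟨hz, heq.ge⟩)⟩, hZN ⟨hz, heq⟩⟩
    · exact Or.inl (Or.inr ⟨hgt, hV2 (Or.inl ⟨hz, hgt.le⟩)⟩)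
  · have k1 : ContinuousOn g (V ∩ {y | h y ≤ 1/2}) :=
      (cg1.mono (fun y hy => V1' y hy.1 hy.2)).congr (gon1.mono inter_subset_right)
    have k2 : ContinuousOn g (V ∩ {y | 1/2 ≤ h y}) :=
      (cg2.mono (fun y hy => V2' y hy.1 hy.2)).congr gon2
    intro y hy
    have : V = (V ∩ {y | h y ≤ 1/2}) ∪ (V ∩ {y | 1/2 ≤ h y}) := by
      ext t
      constructor
      · intro ht
        rcases le_total (h t) (1/2) with h' | h'
        · exact Or.inl ⟨ht, h'⟩
        · exact Or.inr ⟨ht, h'⟩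
      · rintro (ht | ht)
        · exact ht.1
        · exact ht.1
    rw [this]
    refine ContinuousWithinAt.union ?_ ?_
    · by_cases h' : h y ≤ 1/2
      · exact k1 y ⟨hy, h'⟩
      · refine continuousWithinAt_of_notMem_closure fun hc => h' ?_
        exact (closure_minimal inter_subset_right cY1 hc)
    · by_cases h' : 1/2 ≤ h y
      · exact k2 y ⟨hy, h'⟩
      · refine continuousWithinAt_of_notMem_closure fun hc => h' ?_
        exact (closure_minimal inter_subset_right cY2 hc)
  · intro y hy
    rcases le_total (h y) (1/2) with h' | h'
    · rw [gon1 h']; exact Or.inl (mg1 (V1' y hy h'))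
    · rw [gon2 ⟨hy, h'⟩]; exact Or.inr (mg2 (V2' y hy h'))
  · intro z hz
    rcases le_total (h z) (1/2) with h' | h'
    · rw [gon1 h', eg1 (Or.inl ⟨hz, h'⟩), f'Z hz]
    · by_cases hzV : z ∈ V
      · rw [gon2 ⟨hzV, h'⟩, eg2 (Or.inl ⟨hz, h'⟩), f'Z hz]
      · exfalso; apply hzV
        rcases h'.lt_or_eq with hgt | heq
        · exact Or.inl (Or.inr ⟨hgt, hV2 (Or.inl ⟨hz, hgt.le⟩)⟩)
        · exact Or.inr ⟨⟨hV1 (Or.inl ⟨hz, heq.ge⟩), hV2 (Or.inl ⟨hz, heq.le⟩)⟩, hZN ⟨hz, heq.symm⟩⟩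

theorem ANEOn.of_local {X : Type} [TopologicalSpace X] [CompactSpace X]
    (h : ∀ x : X, ∃ U : Set X, IsOpen U ∧ x ∈ U ∧ ANEOn U) : ANEOn (univ : Set X) := by
  classical
  choose U oU mU aU using h
  obtain ⟨t, ht⟩ := isCompact_univ.elim_finite_subcover U oU (fun x _ => mem_iUnion.2 ⟨x, mU x⟩)
  have key : ∀ s : Finset X, ANEOn (⋃ i ∈ s, U i) := by
    intro s
    induction s using Finset.induction_on with
    | empty => simpa using ANEOn.empty
    | insert a s ha ih =>
      rw [Finset.set_biUnion_insert]
      exact (aU a).union ih (oU a) (isOpen_biUnion fun i _ => oU i)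
  rw [← univ_subset_iff.1 ht]
  exact key t

theorem ANEOn.isANR {X : Type} [MetricSpace X] [Nonempty X] (h : ANEOn (univ : Set X)) :
    IsANR X := by
  classical
  intro Y _ Z hZ f
  let F : Y → X := fun y => if hy : y ∈ Z then f ⟨y, hy⟩ else Classical.arbitrary X
  have hF : ∀ z (hz : z ∈ Z), F z = f ⟨z, hz⟩ := fun z hz => dif_pos hz
  obtain ⟨V, g, oV, hZV, cg, -, eg⟩ := h Y Z F hZ (by
    rw [continuousOn_iff_continuous_domRestrict]
    convert f.continuous using 1
    ext z; exact hF z z.2) (mapsTo_univ _ _)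
  refine ⟨V, oV, hZV, ⟨V.domRestrict g, continuousOn_iff_continuous_domRestrict.1 cg⟩, ?_⟩
  intro z hz
  exact (eg hz).trans (hF z hz)

/-- Weighted `ℓ¹` distance on sequences. -/
noncomputable def wD (a b : ℕ → ℝ) : ℝ := ∑' k, (1/2 : ℝ)^k * |a k - b k|

theorem wD_term_le {a b : ℕ → ℝ} (ha : ∀ k, a k ∈ Icc (0:ℝ) 1) (hb : ∀ k, b k ∈ Icc (0:ℝ) 1)
    (k : ℕ) : (1/2 : ℝ)^k * |a k - b k| ≤ (1/2 : ℝ)^k := by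
  have : |a k - b k| ≤ 1 := by
    rw [abs_le]; constructor <;> linarith [(ha k).1, (ha k).2, (hb k).1, (hb k).2]
  have h2 : (0:ℝ) ≤ (1/2 : ℝ)^k := by positivity
  nlinarith

theorem wD_summable {a b : ℕ → ℝ} (ha : ∀ k, a k ∈ Icc (0:ℝ) 1) (hb : ∀ k, b k ∈ Icc (0:ℝ) 1) :
    Summable (fun k => (1/2 : ℝ)^k * |a k - b k|) :=
  Summable.of_nonneg_of_le (fun k => by positivity) (wD_term_le ha hb) summable_geometric_two

theorem wD_self (a : ℕ → ℝ) : wD a a = 0 := by simp [wD]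

theorem wD_comm (a b : ℕ → ℝ) : wD a b = wD b a := by
  simp only [wD, abs_sub_comm]

theorem wD_nonneg (a b : ℕ → ℝ) : 0 ≤ wD a b := tsum_nonneg fun k => by positivity

theorem wD_coord {a b : ℕ → ℝ} (ha : ∀ k, a k ∈ Icc (0:ℝ) 1) (hb : ∀ k, b k ∈ Icc (0:ℝ) 1)
    (k : ℕ) : |a k - b k| ≤ 2^k * wD a b := by
  have h := (wD_summable ha hb).le_tsum k (fun j _ => by positivity)
  change (1/2 : ℝ)^k * |a k - b k| ≤ wD a b at h
  have h2 : (2:ℝ)^k * (1/2 : ℝ)^k = 1 := by rw [← mul_pow]; norm_num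
  have h3 : (0:ℝ) ≤ 2^k := by positivity
  calc |a k - b k| = 2^k * ((1/2 : ℝ)^k * |a k - b k|) := by rw [← mul_assoc, h2, one_mul]
    _ ≤ _ := mul_le_mul_of_nonneg_left h h3

theorem wD_add {a b c : ℕ → ℝ} (ha : ∀ k, a k ∈ Icc (0:ℝ) 1) (hb : ∀ k, b k ∈ Icc (0:ℝ) 1)
    (hc : ∀ k, c k ∈ Icc (0:ℝ) 1) (h : ∀ k, |a k - c k| = |a k - b k| + |b k - c k|) :
    wD a c = wD a b + wD b c := by
  unfold wD
  rw [← (wD_summable ha hb).tsum_add (wD_summable hb hc)]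
  congr 1; ext k; rw [h k]; ring

theorem wD_triangle {a b c : ℕ → ℝ} (ha : ∀ k, a k ∈ Icc (0:ℝ) 1) (hb : ∀ k, b k ∈ Icc (0:ℝ) 1)
    (hc : ∀ k, c k ∈ Icc (0:ℝ) 1) :
    wD a c ≤ wD a b + wD b c := by
  unfold wD
  rw [← (wD_summable ha hb).tsum_add (wD_summable hb hc)]
  refine (wD_summable ha hc).tsum_le_tsum (fun k => ?_) ((wD_summable ha hb).add (wD_summable hb hc))
  rw [← mul_add]
  exact mul_le_mul_of_nonneg_left (abs_sub_le _ _ _) (by positivity)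

theorem wD_continuous {T : Type*} [TopologicalSpace T] {f g : T → ℕ → ℝ}
    (hf : ∀ k, Continuous fun t => f t k) (hg : ∀ k, Continuous fun t => g t k)
    (hf1 : ∀ t k, f t k ∈ Icc (0:ℝ) 1) (hg1 : ∀ t k, g t k ∈ Icc (0:ℝ) 1) :
    Continuous fun t => wD (f t) (g t) := by
  unfold wD
  refine continuous_tsum (u := fun k => (1/2:ℝ)^k) (fun k => ?_) summable_geometric_two ?_
  · exact continuous_const.mul ((hf k).sub (hg k)).abs
  · intro k t
    rw [Real.norm_of_nonneg (by positivity)]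
    exact wD_term_le (hf1 t) (hg1 t) k

/-- Finite Helly property with Helly number two for a median interval structure. -/
theorem helly_two {T ι : Type*} (I : T → T → Set T)
    (hmed : ∀ x y z, (I x y ∩ I y z ∩ I x z).Nonempty) (s : Finset ι) (hs : s.Nonempty) :
    ∀ C : ι → Set T, (∀ i ∈ s, ∀ x ∈ C i, ∀ y ∈ C i, I x y ⊆ C i) →
      (∀ i ∈ s, ∀ j ∈ s, (C i ∩ C j).Nonempty) → (⋂ i ∈ s, C i).Nonempty := by
  classical
  induction hs using Finset.Nonempty.cons_induction with
  | singleton a =>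
    intro C _ h
    simpa using h a (by simp) a (by simp)
  | cons a s ha hs ih =>
    intro C hC hp
    obtain ⟨x, hx⟩ := ih (fun i => C i ∩ C a) (by
      intro i hi x hx y hy
      exact subset_inter (hC i (by simp [hi]) x hx.1 y hy.1) (hC a (by simp) x hx.2 y hy.2)) (by
      intro i hi j hj
      obtain ⟨p, hp1, hp2⟩ := hp i (by simp [hi]) j (by simp [hj])
      obtain ⟨q, hq1, hq2⟩ := hp j (by simp [hj]) a (by simp)
      obtain ⟨r, hr1, hr2⟩ := hp i (by simp [hi]) a (by simp)
      obtain ⟨m, ⟨m1, m2⟩, m3⟩ := hmed p q r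
      have k1 := hC j (by simp [hj]) p hp2 q hq1 m1
      have k2 := hC a (by simp) q hq2 r hr2 m2
      have k3 := hC i (by simp [hi]) p hp1 r hr1 m3
      exact ⟨m, ⟨k3, k2⟩, ⟨k1, k2⟩⟩)
    simp only [mem_iInter, mem_inter_iff] at hx
    refine ⟨x, ?_⟩
    simp only [mem_iInter, Finset.mem_cons]
    rintro i (rfl | hi)
    · obtain ⟨j, hj⟩ := hs
      exact (hx j hj).2
    · exact (hx i hi).1

theorem tree_ANE {T : Type} [TopologicalSpace T] [T2Space T] {K : Set T} (hK : IsCompact K)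
    (I : T → T → Set T) (hIc : ∀ x y, IsPreconnected (I x y))
    (hl : ∀ x y, x ∈ I x y) (hr : ∀ x y, y ∈ I x y)
    (htri : ∀ x y z, I x z ⊆ I x y ∪ I y z)
    (hmed : ∀ x y z, (I x y ∩ I y z ∩ I x z).Nonempty)
    (hKI : ∀ x ∈ K, ∀ y ∈ K, I x y ⊆ K)
    (u : ℕ → T → ℝ) (hu : ∀ k, Continuous (u k)) (hu1 : ∀ x k, u k x ∈ Icc (0:ℝ) 1)
    (hsep : ∀ x ∈ K, ∀ y ∈ K, (∀ k, u k x = u k y) → x = y)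
    (hmono : ∀ k x y z, z ∈ I x y → |u k x - u k y| = |u k x - u k z| + |u k z - u k y|) :
    ANEOn K := by
  classical
  let U : T → ℕ → ℝ := fun x k => u k x
  have hU1 : ∀ x k, U x k ∈ Icc (0:ℝ) 1 := hu1
  have hUadd : ∀ x y z, z ∈ I x y → wD (U x) (U y) = wD (U x) (U z) + wD (U z) (U y) :=
    fun x y z hz => wD_add (hU1 x) (hU1 z) (hU1 y) (fun k => hmono k x y z hz)
  have hDc : ∀ x, Continuous fun y => wD (U x) (U y) := fun x =>
    wD_continuous (fun k => continuous_const) (fun k => hu k) (fun _ => hU1 x) hU1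
  let S : Set (Set ((ℕ → ℝ) × T)) := {G | (∀ p ∈ G, (∀ k, p.1 k ∈ Icc (0:ℝ) 1) ∧ p.2 ∈ K) ∧
    ∀ p ∈ G, ∀ q ∈ G, wD (U p.2) (U q.2) ≤ wD p.1 q.1}
  let G0 : Set ((ℕ → ℝ) × T) := (fun x => (U x, x)) '' K
  have hG0 : G0 ∈ S := by
    refine ⟨?_, ?_⟩
    · rintro _ ⟨x, hx, rfl⟩; exact ⟨hU1 x, hx⟩
    · rintro _ ⟨x, hx, rfl⟩ _ ⟨y, hy, rfl⟩; exact le_rfl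
  obtain ⟨M, hGM, hM⟩ := zorn_subset_nonempty S (by
    intro c hc hch _
    refine ⟨⋃₀ c, ⟨?_, ?_⟩, fun s hs => subset_sUnion_of_mem hs⟩
    · rintro p ⟨s, hs, hp⟩; exact (hc hs).1 p hp
    · rintro p ⟨s, hs, hp⟩ q ⟨t, ht, hq⟩
      rcases hch.total hs ht with h | h
      · exact (hc ht).2 p (h hp) q hq
      · exact (hc hs).2 p hp q (h hq)) G0 hG0
  have hMS : M ∈ S := hM.prop
  have tot : K.Nonempty → ∀ a : ℕ → ℝ, (∀ k, a k ∈ Icc (0:ℝ) 1) → ∃ x, (a, x) ∈ M := by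
    intro hKne a ha
    let C : M → Set T := fun p => {x ∈ K | wD (U p.1.2) (U x) ≤ wD p.1.1 a}
    have hCcl : ∀ p, IsClosed (C p) := fun p =>
      hK.isClosed.inter (isClosed_le (hDc _) continuous_const)
    have hCconv : ∀ p, ∀ x ∈ C p, ∀ y ∈ C p, I x y ⊆ C p := by
      intro p x hx y hy z hz
      refine ⟨hKI x hx.1 y hy.1 hz, ?_⟩
      rcases htri x p.1.2 y hz with h | h
      · have h1 := hUadd _ _ _ h
        rw [wD_comm (U p.1.2)]
        have h2 := hx.2
        rw [wD_comm (U p.1.2)] at h2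
        linarith [wD_nonneg (U x) (U z)]
      · have h1 := hUadd _ _ _ h
        have h2 : wD (U p.1.2) (U y) ≤ wD p.1.1 a := hy.2
        linarith [wD_nonneg (U z) (U y)]
    have hCpair : ∀ p q, (C p ∩ C q).Nonempty := by
      intro p q
      have hp := hMS.1 p.1 p.2
      have hq := hMS.1 q.1 q.2
      have h1 : wD (U p.1.2) (U q.1.2) ≤ wD p.1.1 a + wD q.1.1 a := by
        refine (hMS.2 p.1 p.2 q.1 q.2).trans ?_
        rw [wD_comm q.1.1 a]
        exact wD_triangle hp.1 ha hq.1
      by_cases hle : wD (U p.1.2) (U q.1.2) ≤ wD p.1.1 a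
      · refine ⟨q.1.2, ⟨hq.2, hle⟩, hq.2, ?_⟩
        rw [wD_self]; exact wD_nonneg _ _
      · push Not at hle
        have := (hIc p.1.2 q.1.2).intermediate_value (hl _ _) (hr _ _)
          (hDc p.1.2).continuousOn
        obtain ⟨z, hz, hz2⟩ := this (show wD p.1.1 a ∈ Icc _ _ from
          ⟨by rw [wD_self]; exact wD_nonneg _ _, hle.le⟩)
        simp only at hz2
        have hzK := hKI _ hp.2 _ hq.2 hz
        refine ⟨z, ⟨hzK, hz2.le⟩, hzK, ?_⟩
        have h3 := hUadd _ _ _ hz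
        rw [wD_comm (U q.1.2)]
        linarith
    obtain ⟨x, hxK, hx⟩ := hK.inter_iInter_nonempty C hCcl (by
      intro s
      rcases s.eq_empty_or_nonempty with rfl | hs
      · simpa using hKne
      · obtain ⟨x, hx⟩ := helly_two I hmed s hs C (fun i _ => hCconv i)
          (fun i _ j _ => hCpair i j)
        obtain ⟨i, hi⟩ := hs
        exact ⟨x, (mem_iInter₂.1 hx i hi).1, hx⟩)
    rw [mem_iInter] at hx
    refine ⟨x, ?_⟩
    have hins : insert (a, x) M ∈ S := by
      refine ⟨?_, ?_⟩
      · rintro p (rfl | hp)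
        · exact ⟨ha, hxK⟩
        · exact hMS.1 p hp
      · rintro p (rfl | hp) q (rfl | hq)
        · simp [wD_self]
        · have := (hx ⟨q, hq⟩).2
          simp only at this ⊢
          rwa [wD_comm, wD_comm a]
        · exact (hx ⟨p, hp⟩).2
        · exact hMS.2 p hp q hq
    exact hM.le_of_ge hins (subset_insert _ _) (mem_insert _ _)
  intro Y _ Z f hZ hf hm
  rcases Z.eq_empty_or_nonempty with rfl | ⟨z0, hz0⟩
  · exact ⟨∅, f, isOpen_empty, subset_rfl, continuousOn_empty f, mapsTo_empty f K, eqOn_empty f f⟩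
  have hKne : K.Nonempty := ⟨f z0, hm hz0⟩
  have ext : ∀ k, ∃ g : C(Y, ℝ), (∀ y, g y ∈ Icc (0:ℝ) 1) ∧ ∀ z ∈ Z, g z = u k (f z) := by
    intro k
    obtain ⟨g, hg1, hg2⟩ := ContinuousMap.exists_restrict_eq_forall_mem_of_closed
      (s := Z) (t := Icc (0:ℝ) 1)
      ⟨fun z : Z => u k (f z), (hu k).comp (continuousOn_iff_continuous_domRestrict.1 hf)⟩
      (fun z => hu1 _ _) ⟨0, by simp⟩ hZ
    refine ⟨g, hg1, fun z hz => ?_⟩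
    exact DFunLike.congr_fun hg2 ⟨z, hz⟩
  choose g hg1 hg2 using ext
  have hr' : ∀ y : Y, ∃ x, ((fun k => g k y : ℕ → ℝ), x) ∈ M :=
    fun y => tot hKne _ (fun k => hg1 k y)
  choose r hrM using hr'
  have hrK : ∀ y, r y ∈ K := fun y => (hMS.1 _ (hrM y)).2
  have hrc : ∀ k, Continuous fun y => u k (r y) := by
    intro k
    rw [continuous_iff_continuousAt]
    intro y0
    have hc : Continuous fun y => 2^k * wD (fun k => g k y) (fun k => g k y0) :=
      continuous_const.mul (wD_continuous (fun k => (g k).continuous) (fun k => continuous_const)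
        (fun y k => hg1 k y) (fun _ k => hg1 k y0))
    have hc0 := hc.tendsto y0
    rw [wD_self, mul_zero] at hc0
    rw [ContinuousAt, tendsto_iff_dist_tendsto_zero]
    refine squeeze_zero (fun _ => dist_nonneg) (fun y => ?_) hc0
    rw [Real.dist_eq]
    refine (wD_coord (hU1 (r y)) (hU1 (r y0)) k).trans ?_
    exact mul_le_mul_of_nonneg_left (hMS.2 _ (hrM y) _ (hrM y0)) (by positivity)
  have hrcont : Continuous r := by
    have : CompactSpace K := isCompact_iff_compactSpace.1 hK
    let e : K → ℕ → ℝ := fun x => U x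
    have he : Continuous e := continuous_pi fun k => (hu k).comp continuous_subtype_val
    have hei : Function.Injective e := fun x y h =>
      Subtype.ext (hsep _ x.2 _ y.2 fun k => congrFun h k)
    have hemb := he.isClosedEmbedding hei
    have : Continuous (fun y => (⟨r y, hrK y⟩ : K)) := by
      rw [hemb.isInducing.continuous_iff]
      exact continuous_pi fun k => hrc k
    exact continuous_subtype_val.comp this
  refine ⟨univ, r, isOpen_univ, subset_univ _, hrcont.continuousOn, fun y _ => hrK y, ?_⟩
  intro z hz
  have h1 : (U (f z), f z) ∈ M := hGM ⟨f z, hm hz, rfl⟩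
  have h2 := hMS.2 _ (hrM z) _ h1
  have h3 : (fun k => g k z) = U (f z) := by ext k; exact hg2 k z hz
  simp only [h3, wD_self] at h2
  refine hsep _ (hrK z) _ (hm hz) fun k => ?_
  have h4 := wD_coord (hU1 (r z)) (hU1 (f z)) k
  have h5 : wD (U (r z)) (U (f z)) = 0 := le_antisymm h2 (wD_nonneg _ _)
  rw [h5, mul_zero] at h4
  exact sub_eq_zero.1 (abs_nonpos_iff.1 h4)

theorem isPreconnected_sInter_of_inter {T : Type*} [TopologicalSpace T] [T2Space T]
    {F : Set (Set T)} (hne : F.Nonempty) (hc : ∀ A ∈ F, IsCompact A)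
    (hp : ∀ A ∈ F, IsPreconnected A) (hi : ∀ A ∈ F, ∀ B ∈ F, A ∩ B ∈ F) :
    IsPreconnected (⋂₀ F) := by
  rw [isPreconnected_closed_iff]
  intro t t' ht ht' hsub h1 h2
  by_contra hcon
  have hKc : IsCompact (⋂₀ F) := by
    obtain ⟨A, hA⟩ := hne
    exact (hc A hA).of_isClosed_subset (isClosed_sInter fun B hB => (hc B hB).isClosed)
      (sInter_subset_of_mem hA)
  have hdis : Disjoint (⋂₀ F ∩ t) (⋂₀ F ∩ t') := by
    rw [Set.disjoint_left]
    intro x hx hx'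
    exact hcon ⟨x, hx.1, hx.2, hx'.2⟩
  obtain ⟨U, V, oU, oV, hU, hV, hUV⟩ := SeparatedNhds.of_isCompact_isCompact
    (hKc.inter_right ht) (hKc.inter_right ht') hdis
  have : Nonempty F := hne.to_subtype
  have hdir : Directed (· ⊇ ·) (fun A : F => (A : Set T)) := fun A B =>
    ⟨⟨A.1 ∩ B.1, hi _ A.2 _ B.2⟩, inter_subset_left, inter_subset_right⟩
  obtain ⟨A, hA⟩ := exists_subset_nhds_of_isCompact (U := U ∪ V) hdir (fun A => hc _ A.2) (by
    intro x hx
    rw [← sInter_eq_iInter] at hx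
    refine (oU.union oV).mem_nhds ?_
    rcases hsub hx with h | h
    · exact Or.inl (hU ⟨hx, h⟩)
    · exact Or.inr (hV ⟨hx, h⟩))
  have hsA : ⋂₀ F ⊆ A := sInter_subset_of_mem A.2
  obtain ⟨x, -, hx1, hx2⟩ := hp _ A.2 U V oU oV hA
    (h1.imp fun x hx => ⟨hsA hx.1, hU hx⟩) (h2.imp fun x hx => ⟨hsA hx.1, hV hx⟩)
  exact Set.disjoint_left.1 hUV hx1 hx2

/-- The interval between two points: the intersection of all continua containing them. -/
def itv {T : Type*} [TopologicalSpace T] (x y : T) : Set T :=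
  ⋂₀ {A | IsCompact A ∧ IsConnected A ∧ x ∈ A ∧ y ∈ A}

/-- Hereditary unicoherence. -/
def HUni (T : Type*) [TopologicalSpace T] : Prop :=
  ∀ A B : Set T, IsCompact A → IsConnected A → IsCompact B → IsConnected B → IsPreconnected (A ∩ B)

section itv
set_option linter.unusedSectionVars false
variable {T : Type*} [TopologicalSpace T]

theorem itv_symm (x y : T) : itv x y = itv y x := by
  unfold itv; congr 1; ext A; simp only [mem_ofPred_eq]; tauto

theorem itv_left (x y : T) : x ∈ itv x y := fun _ hA => hA.2.2.1
theorem itv_right (x y : T) : y ∈ itv x y := fun _ hA => hA.2.2.2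

theorem itv_sub {x y : T} {A : Set T} (h1 : IsCompact A) (h2 : IsConnected A) (hx : x ∈ A)
    (hy : y ∈ A) : itv x y ⊆ A := sInter_subset_of_mem ⟨h1, h2, hx, hy⟩

variable [LocallyPathConnectedSpace T]

theorem exists_continuum {V : Set T} (oV : IsOpen V) (cV : IsConnected V) {x y : T} (hx : x ∈ V)
    (hy : y ∈ V) : ∃ A ⊆ V, IsCompact A ∧ IsConnected A ∧ x ∈ A ∧ y ∈ A := by
  have h := (oV.isConnected_iff_isPathConnected.1 cV).joinedIn x hx y hy
  refine ⟨range h.somePath, ?_, isCompact_range h.somePath.continuous,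
    isConnected_range h.somePath.continuous, ⟨0, h.somePath.source⟩, ⟨1, h.somePath.target⟩⟩
  rintro _ ⟨t, rfl⟩
  exact h.somePath_mem t

theorem itv_open {V : Set T} (oV : IsOpen V) (cV : IsConnected V) {x y : T} (hx : x ∈ V)
    (hy : y ∈ V) : itv x y ⊆ V := by
  obtain ⟨A, hAV, h1, h2, h3, h4⟩ := exists_continuum oV cV hx hy
  exact (itv_sub h1 h2 h3 h4).trans hAV

variable [T2Space T] [ConnectedSpace T]

theorem itv_fam (x y : T) : {A | IsCompact A ∧ IsConnected A ∧ x ∈ A ∧ y ∈ A}.Nonempty := by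
  obtain ⟨A, -, h⟩ := exists_continuum isOpen_univ isConnected_univ (mem_univ x) (mem_univ y)
  exact ⟨A, h⟩

theorem itv_conn (H : HUni T) (x y : T) : IsConnected (itv x y) := by
  refine ⟨⟨x, itv_left x y⟩, isPreconnected_sInter_of_inter (itv_fam x y) (fun A hA => hA.1)
    (fun A hA => hA.2.1.isPreconnected) ?_⟩
  intro A hA B hB
  exact ⟨hA.1.inter hB.1, ⟨⟨x, hA.2.2.1, hB.2.2.1⟩, H A B hA.1 hA.2.1 hB.1 hB.2.1⟩,
    ⟨hA.2.2.1, hB.2.2.1⟩, ⟨hA.2.2.2, hB.2.2.2⟩⟩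

theorem itv_compact (x y : T) : IsCompact (itv x y) := by
  obtain ⟨A, hA⟩ := itv_fam x y
  exact hA.1.of_isClosed_subset (isClosed_sInter fun B hB => hB.1.isClosed)
      (sInter_subset_of_mem hA)

theorem itv_tri (H : HUni T) (x y z : T) : itv x z ⊆ itv x y ∪ itv y z :=
  itv_sub ((itv_compact x y).union (itv_compact y z))
    (IsConnected.union ⟨y, itv_right x y, itv_left y z⟩ (itv_conn H x y) (itv_conn H y z))
    (Or.inl (itv_left x y)) (Or.inr (itv_right y z))

theorem itv_med (H : HUni T) (x y z : T) : (itv x y ∩ itv y z ∩ itv x z).Nonempty := by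
  have h := (isPreconnected_closed_iff.1 (itv_conn H x z).isPreconnected) _ _
    (itv_compact x y).isClosed (itv_compact y z).isClosed (itv_tri H x y z)
    ⟨x, itv_left _ _, itv_left _ _⟩ ⟨z, itv_right _ _, itv_right _ _⟩
  obtain ⟨m, h1, h2⟩ := h
  exact ⟨m, h2, h1⟩

/-- Order convexity for the interval operator. -/
def cvx (S : Set T) : Prop := ∀ x ∈ S, ∀ y ∈ S, itv x y ⊆ S

theorem cvx.preconn (H : HUni T) {S : Set T} (h : cvx S) : IsPreconnected S :=
  isPreconnected_of_forall_pair fun x hx y hy =>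
    ⟨itv x y, h x hx y hy, itv_left _ _, itv_right _ _, (itv_conn H x y).isPreconnected⟩

theorem cvx_closure {V : Set T} (oV : IsOpen V) (cV : IsConnected V) : cvx (closure V) := by
  have key : ∀ x ∈ closure V, ∀ z, z ≠ x → ∃ N : Set T, IsOpen N ∧ IsConnected N ∧ x ∈ N ∧ z ∉ N ∧
      (V ∩ N).Nonempty := by
    intro x hx z hz
    have o : IsOpen ({z}ᶜ : Set T) := isOpen_compl_singleton
    have hxz : x ∈ ({z}ᶜ : Set T) := fun h => hz h.symm
    refine ⟨connectedComponentIn {z}ᶜ x, o.connectedComponentIn,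
      isConnected_connectedComponentIn_iff.2 hxz, mem_connectedComponentIn hxz,
      fun h => connectedComponentIn_subset _ _ h rfl, ?_⟩
    rw [inter_comm]
    exact mem_closure_iff.1 hx _ o.connectedComponentIn (mem_connectedComponentIn hxz)
  intro x hx y hy z hz
  by_contra hzV
  obtain ⟨N, oN, cN, hxN, hzN, hN⟩ := key x hx z (fun h => hzV (h ▸ hx))
  obtain ⟨N', oN', cN', hyN', hzN', hN'⟩ := key y hy z (fun h => hzV (h ▸ hy))
  have c1 : IsConnected (V ∪ N) := IsConnected.union hN cV cN
  have c2 : IsConnected (V ∪ N ∪ N') :=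
    IsConnected.union (hN'.mono (inter_subset_inter_left _ subset_union_left)) c1 cN'
  have := itv_open ((oV.union oN).union oN') c2 (x := x) (y := y) (Or.inl (Or.inr hxN)) (Or.inr hyN') hz
  rcases this with (h | h) | h
  · exact hzV (subset_closure h)
  · exact hzN h
  · exact hzN' h

theorem cvx_compl_component (H : HUni T) {A : Set T} (cA : IsClosed A) (hA : cvx A)
    (hne : A.Nonempty) (c : T) : cvx (connectedComponentIn Aᶜ c)ᶜ := by
  set V := connectedComponentIn Aᶜ c with hV
  have oV : IsOpen V := cA.isOpen_compl.connectedComponentIn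
  have hAV : A ⊆ Vᶜ := fun a ha hv => connectedComponentIn_subset _ _ hv ha
  have key : ∀ x ∈ Vᶜ, ∃ a ∈ A, itv x a ⊆ Vᶜ := by
    intro x hx
    by_cases hxA : x ∈ A
    · exact ⟨x, hxA, (hA x hxA x hxA).trans hAV⟩
    set G := connectedComponentIn Aᶜ x with hG
    have hxG : x ∈ G := mem_connectedComponentIn hxA
    have oG : IsOpen G := cA.isOpen_compl.connectedComponentIn
    have cG : IsConnected G := isConnected_connectedComponentIn_iff.2 hxA
    have hGV : Disjoint G V := by
      rw [Set.disjoint_left]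
      intro t h1 h2
      apply hx
      have e1 := connectedComponentIn_eq h1
      have e2 := connectedComponentIn_eq h2
      rw [hV, e2, ← e1]; exact hxG
    have hcl : (closure G ∩ A).Nonempty := by
      by_contra hcon
      have hsub : closure G ⊆ Aᶜ := fun t ht hta => hcon ⟨t, ht, hta⟩
      have h2 : closure G ⊆ G :=
        cG.isPreconnected.closure.subset_connectedComponentIn (subset_closure hxG) hsub
      have h3 : IsClopen G := ⟨closure_subset_iff_isClosed.1 h2, oG⟩
      have h4 := h3.eq_univ ⟨x, hxG⟩
      obtain ⟨a, ha⟩ := hne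
      exact connectedComponentIn_subset Aᶜ x (h4 ▸ mem_univ a : a ∈ G) ha
    obtain ⟨a, haG, haA⟩ := hcl
    refine ⟨a, haA, (cvx_closure oG cG x (subset_closure hxG) a haG).trans ?_⟩
    exact closure_minimal (fun t ht hv => Set.disjoint_left.1 hGV ht hv) oV.isClosed_compl
  intro x hx y hy
  obtain ⟨a, ha, hxa⟩ := key x hx
  obtain ⟨b, hb, hyb⟩ := key y hy
  refine (itv_tri H x a y).trans (union_subset hxa ((itv_tri H a b y).trans (union_subset ?_ ?_)))
  · exact (hA a ha b hb).trans hAV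
  · rwa [itv_symm]

theorem cvx_interpolate [NormalSpace T] (H : HUni T) {C U : Set T} (cC : IsClosed C) (oU : IsOpen U)
    (hCU : C ⊆ U) (h1 : cvx C) (h2 : cvx Uᶜ) (n1 : C.Nonempty) (n2 : (Uᶜ).Nonempty) :
    ∃ V, IsOpen V ∧ C ⊆ V ∧ closure V ⊆ U ∧ cvx Vᶜ ∧ cvx (closure V) ∧ V.Nonempty ∧
      (Vᶜ).Nonempty := by
  obtain ⟨N, oN, hCN, hNU⟩ := normal_exists_closure_subset cC oU hCU
  obtain ⟨d, hd⟩ := n2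
  obtain ⟨c, hc⟩ := n1
  have oO : IsOpen (closure N)ᶜ := isClosed_closure.isOpen_compl
  have hDO : Uᶜ ⊆ (closure N)ᶜ := compl_subset_compl.2 hNU
  set F := connectedComponentIn (closure N)ᶜ d with hF
  have oF : IsOpen F := oO.connectedComponentIn
  have cF : IsConnected F := isConnected_connectedComponentIn_iff.2 (hDO hd)
  have hDF : Uᶜ ⊆ F := (h2.preconn H).subset_connectedComponentIn hd hDO
  have hCF : C ⊆ (closure F)ᶜ := by
    intro t ht htF
    obtain ⟨s, hs1, hs2⟩ := mem_closure_iff.1 htF N oN (hCN ht)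
    exact connectedComponentIn_subset _ _ hs2 (subset_closure hs1)
  have oc : IsOpen (closure F)ᶜ := isClosed_closure.isOpen_compl
  set V := connectedComponentIn (closure F)ᶜ c with hV
  have oV : IsOpen V := oc.connectedComponentIn
  have hCV : C ⊆ V := (h1.preconn H).subset_connectedComponentIn hc hCF
  have cV : IsConnected V := isConnected_connectedComponentIn_iff.2 (hCF hc)
  have hVF : closure V ⊆ Fᶜ := closure_minimal
    ((connectedComponentIn_subset _ _).trans (compl_subset_compl.2 subset_closure))
    oF.isClosed_compl
  refine ⟨V, oV, hCV, ?_, ?_, cvx_closure oV cV, ⟨c, hCV hc⟩, ?_⟩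
  · intro t ht
    by_contra htU
    exact hVF ht (hDF htU)
  · exact cvx_compl_component H isClosed_closure (cvx_closure oF cF) (cF.nonempty.closure) c
  · exact ⟨d, fun h => hVF (subset_closure h) (hDF hd)⟩

/-- predicate for the monotone Urysohn construction -/
def cvxP (C U : Set T) : Prop := cvx C ∧ cvx Uᶜ ∧ C.Nonempty ∧ (Uᶜ).Nonempty

theorem lim_monotone_aux (n : ℕ) : ∀ (c : Urysohns.CU (cvxP (T := T))) {x y z : T}, z ∈ itv x y →
    c.lim z ≤ max (c.lim x) (c.lim y) + (1/2)^n ∧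
    min (c.lim x) (c.lim y) ≤ c.lim z + (1/2)^n := by
  induction n with
  | zero =>
    intro c x y z hz
    have h1 := c.lim_nonneg x
    have h2 := c.lim_le_one x
    have h3 := c.lim_nonneg z
    have h4 := c.lim_le_one z
    constructor
    · have := le_max_left (c.lim x) (c.lim y)
      norm_num; linarith
    · have := min_le_left (c.lim x) (c.lim y)
      norm_num; left; linarith
  | succ n ih =>
    intro c
    have mixed : ∀ {x y z : T}, z ∈ itv x y → x ∉ c.right.C → y ∈ c.left.U →
        c.lim z ≤ c.lim x + (1/2)^(n+1) ∧ c.lim y ≤ c.lim z + (1/2)^(n+1) := by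
      intro x y z hz hx hy
      have hx' : x ∉ c.left.U := fun h => hx (c.left_U_subset_right_C h)
      have e1 := c.left.lim_of_notMem_U x hx'
      have e2 := c.right.lim_of_mem_C y (c.left_U_subset_right_C hy)
      obtain ⟨-, a2⟩ := ih c.left hz
      obtain ⟨b1, -⟩ := ih c.right hz
      rw [e1, min_eq_right (c.left.lim_le_one y)] at a2
      rw [e2, max_eq_left (c.right.lim_nonneg x)] at b1
      have h4 := c.left.lim_le_one z
      have h5 := c.right.lim_nonneg z
      simp only [c.lim_eq_midpoint, midpoint_eq_smul_add, smul_eq_mul, e1, e2, pow_succ,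
        invOf_eq_inv]
      constructor <;> linarith
    intro x y z hz
    by_cases hR : x ∈ c.right.C ∧ y ∈ c.right.C
    · have hzR : z ∈ c.right.C := c.right.P_C_U.1 x hR.1 y hR.2 hz
      have e1 := c.right.lim_of_mem_C x hR.1
      have e2 := c.right.lim_of_mem_C y hR.2
      have e3 := c.right.lim_of_mem_C z hzR
      obtain ⟨a1, a2⟩ := ih c.left hz
      simp only [c.lim_eq_midpoint, midpoint_eq_smul_add, smul_eq_mul, e1, e2, e3, pow_succ,
        invOf_eq_inv, add_zero]
      rcases le_total (c.left.lim x) (c.left.lim y) with h | h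
      · rw [max_eq_right h] at a1
        rw [min_eq_left h] at a2
        rw [max_eq_right (by linarith), min_eq_left (by linarith)]
        constructor <;> linarith
      · rw [max_eq_left h] at a1
        rw [min_eq_right h] at a2
        rw [max_eq_left (by linarith), min_eq_right (by linarith)]
        constructor <;> linarith
    by_cases hL : x ∉ c.left.U ∧ y ∉ c.left.U
    · have hzL : z ∉ c.left.U := c.left.P_C_U.2.1 x hL.1 y hL.2 hz
      have e1 := c.left.lim_of_notMem_U x hL.1
      have e2 := c.left.lim_of_notMem_U y hL.2
      have e3 := c.left.lim_of_notMem_U z hzL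
      obtain ⟨a1, a2⟩ := ih c.right hz
      simp only [c.lim_eq_midpoint, midpoint_eq_smul_add, smul_eq_mul, e1, e2, e3, pow_succ,
        invOf_eq_inv]
      rcases le_total (c.right.lim x) (c.right.lim y) with h | h
      · rw [max_eq_right h] at a1
        rw [min_eq_left h] at a2
        rw [max_eq_right (by linarith), min_eq_left (by linarith)]
        constructor <;> linarith
      · rw [max_eq_left h] at a1
        rw [min_eq_right h] at a2
        rw [max_eq_left (by linarith), min_eq_right (by linarith)]
        constructor <;> linarith
    by_cases hx : x ∈ c.right.C
    · have hy : y ∉ c.right.C := fun h => hR ⟨hx, h⟩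
      have hx' : x ∈ c.left.U := by
        by_contra h
        exact hL ⟨h, fun h' => hy (c.left_U_subset_right_C h')⟩
      rw [itv_symm] at hz
      obtain ⟨a1, a2⟩ := mixed hz hy hx'
      exact ⟨a1.trans (by gcongr; exact le_max_right _ _), (min_le_left _ _).trans a2⟩
    · have hy' : y ∈ c.left.U := by
        by_contra h
        exact hL ⟨fun h' => hx (c.left_U_subset_right_C h'), h⟩
      obtain ⟨a1, a2⟩ := mixed hz hx hy'
      exact ⟨a1.trans (by gcongr; exact le_max_left _ _), (min_le_right _ _).trans a2⟩

theorem lim_monotone (c : Urysohns.CU (cvxP (T := T))) {x y z : T} (hz : z ∈ itv x y) :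
    |c.lim x - c.lim y| = |c.lim x - c.lim z| + |c.lim z - c.lim y| := by
  have h0 : Tendsto (fun n : ℕ => (1/2 : ℝ)^n) atTop (𝓝 0) :=
    tendsto_pow_atTop_nhds_zero_of_lt_one (by norm_num) (by norm_num)
  have h1 : c.lim z ≤ max (c.lim x) (c.lim y) := by
    have := ge_of_tendsto' (h0.const_add (max (c.lim x) (c.lim y)))
      (fun n => (lim_monotone_aux n c hz).1)
    simpa using this
  have h2 : min (c.lim x) (c.lim y) ≤ c.lim z := by
    have := ge_of_tendsto' (h0.const_add (c.lim z))
      (fun n => (lim_monotone_aux n c hz).2)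
    simpa using this
  rcases le_total (c.lim x) (c.lim y) with h | h
  · rw [max_eq_right h] at h1
    rw [min_eq_left h] at h2
    rw [abs_of_nonpos (by linarith), abs_of_nonpos (by linarith), abs_of_nonpos (by linarith)]
    ring
  · rw [max_eq_left h] at h1
    rw [min_eq_right h] at h2
    rw [abs_of_nonneg (by linarith), abs_of_nonneg (by linarith), abs_of_nonneg (by linarith)]
    ring

theorem exists_monotone_fun [NormalSpace T] (H : HUni T) {a b : T} (hab : a ≠ b) :
    ∃ u : T → ℝ, Continuous u ∧ (∀ x, u x ∈ Icc (0:ℝ) 1) ∧ u a ≠ u b ∧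
      ∀ x y z, z ∈ itv x y → |u x - u y| = |u x - u z| + |u z - u y| := by
  have hs : ∀ a : T, cvx ({a} : Set T) := by
    rintro a x rfl y rfl
    exact itv_sub isCompact_singleton isConnected_singleton rfl rfl
  let c : Urysohns.CU (cvxP (T := T)) :=
    { C := {a}
      U := {b}ᶜ
      P_C_U := ⟨hs a, by rw [compl_compl]; exact hs b, singleton_nonempty _, by simp⟩
      closed_C := isClosed_singleton
      open_U := isOpen_compl_singleton
      subset := by simpa using hab.symm
      hP := by
        intro c u cc hp ou hcu
        obtain ⟨V, oV, h1, h2, h3, h4, h5, h6⟩ :=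
          cvx_interpolate H cc ou hcu hp.1 hp.2.1 hp.2.2.1 hp.2.2.2
        exact ⟨V, oV, h1, h2, ⟨hp.1, h3, hp.2.2.1, h6⟩, ⟨h4, hp.2.1, h5.closure, hp.2.2.2⟩⟩ }
  refine ⟨c.lim, c.continuous_lim, c.lim_mem_Icc, ?_, fun x y z hz => lim_monotone c hz⟩
  rw [c.lim_of_mem_C a rfl, c.lim_of_notMem_U b (fun h => h rfl)]
  norm_num

end itv

theorem ANEOn_of_HUni {T : Type} [MetricSpace T] [SecondCountableTopology T]
    [LocallyPathConnectedSpace T] [ConnectedSpace T] (H : HUni T) {U : Set T} (oU : IsOpen U)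
    (cU : IsConnected U) (hK : IsCompact (closure U)) : ANEOn U := by
  let P : (T → ℝ) → Prop := fun u => Continuous u ∧ (∀ x, u x ∈ Icc (0:ℝ) 1) ∧
      ∀ x y z, z ∈ itv x y → |u x - u y| = |u x - u z| + |u z - u y|
  have ex : ∀ p : {p : T × T // p.1 ≠ p.2}, ∃ u, P u ∧ u p.1.1 ≠ u p.1.2 := by
    rintro ⟨p, hp⟩
    obtain ⟨u, h1, h2, h3, h4⟩ := exists_monotone_fun H hp
    exact ⟨u, ⟨h1, h2, h4⟩, h3⟩
  choose v hv hvne using ex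
  obtain ⟨S, hS, hSU⟩ := TopologicalSpace.isOpen_iUnion_countable
    (fun p : {p : T × T // p.1 ≠ p.2} => {q : T × T | v p q.1 ≠ v p q.2})
    (fun p => isOpen_ne_fun ((hv p).1.comp continuous_fst) ((hv p).1.comp continuous_snd))
  have hP0 : P (fun _ => 0) := ⟨continuous_const, fun x => by simp, fun x y z _ => by simp⟩
  obtain ⟨u, hu⟩ := ((hS.image v).insert (fun _ => (0:ℝ))).exists_eq_range (insert_nonempty _ _)
  have hPu : ∀ k, P (u k) := by
    intro k
    have : u k ∈ range u := ⟨k, rfl⟩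
    rw [← hu] at this
    rcases this with h | ⟨p, -, h⟩
    · rw [h]; exact hP0
    · rw [← h]; exact hv p
  have hA : ANEOn (closure U) := by
    refine tree_ANE hK itv (fun x y => (itv_conn H x y).isPreconnected) itv_left itv_right
      (itv_tri H) (itv_med H) (cvx_closure oU cU) u (fun k => (hPu k).1) (fun x k => (hPu k).2.1 x)
      ?_ (fun k => (hPu k).2.2)
    intro x _ y _ h
    by_contra hxy
    have : (x, y) ∈ ⋃ p, {q : T × T | v p q.1 ≠ v p q.2} :=
      mem_iUnion.2 ⟨⟨(x, y), hxy⟩, hvne ⟨(x, y), hxy⟩⟩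
    rw [← hSU] at this
    simp only [mem_iUnion] at this
    obtain ⟨p, hp, hne⟩ := this
    have : v p ∈ range u := by rw [← hu]; exact Or.inr ⟨p, hp, rfl⟩
    obtain ⟨k, hk⟩ := this
    apply hne
    simp only [← hk, h k]
  exact hA.of_open_subset oU subset_closure

/-- A chain of small connected open sets. -/
def IsChn {X : Type*} [MetricSpace X] (U : Set X) (ε : ℝ) (x y : X) (N : ℕ)
    (p : ℕ → X) (B : ℕ → Set X) : Prop :=
  p 0 = x ∧ p N = y ∧ ∀ i < N, IsOpen (B i) ∧ IsConnected (B i) ∧ B i ⊆ U ∧ p i ∈ B i ∧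
    p (i+1) ∈ B i ∧ ∀ a ∈ B i, ∀ b ∈ B i, dist a b ≤ ε

theorem exists_chn {X : Type*} [MetricSpace X] [LocallyConnectedSpace X] {U : Set X}
    (oU : IsOpen U) (cU : IsConnected U) {ε : ℝ} (hε : 0 < ε) {x y : X} (hx : x ∈ U) (hy : y ∈ U) :
    ∃ N0, ∀ N ≥ N0, ∃ p B, IsChn U ε x y N p B := by
  refine cU.isPreconnected.induction₂' (fun x y => ∃ N0, ∀ N ≥ N0, ∃ p B, IsChn U ε x y N p B)
    ?_ ?_ hx hy
  · intro x hx
    have o : IsOpen (U ∩ Metric.ball x (ε/2)) := oU.inter Metric.isOpen_ball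
    have hxm : x ∈ U ∩ Metric.ball x (ε/2) := ⟨hx, Metric.mem_ball_self (by positivity)⟩
    set V := connectedComponentIn (U ∩ Metric.ball x (ε/2)) x with hV
    have oV : IsOpen V := o.connectedComponentIn
    have cV : IsConnected V := isConnected_connectedComponentIn_iff.2 hxm
    have hxV : x ∈ V := mem_connectedComponentIn hxm
    have hVs : V ⊆ U ∩ Metric.ball x (ε/2) := connectedComponentIn_subset _ _
    have key : ∀ a ∈ V, ∀ b ∈ V, ∃ N0, ∀ N ≥ N0, ∃ p B, IsChn U ε a b N p B := by
      intro a ha b hb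
      refine ⟨1, fun N hN => ⟨fun i => if i = 0 then a else b, fun _ => V, by simp, ?_, ?_⟩⟩
      · simp only [ite_eq_right_iff]; omega
      · intro i hi
        refine ⟨oV, cV, hVs.trans inter_subset_left, ?_, ?_, ?_⟩
        · dsimp only; split_ifs <;> assumption
        · simpa using hb
        · intro c hc d hd
          have h1 := Metric.mem_ball.1 (hVs hc).2
          have h2 := Metric.mem_ball.1 (hVs hd).2
          linarith [dist_triangle_right c d x]
    filter_upwards [mem_nhdsWithin_of_mem_nhds (oV.mem_nhds hxV)] with z hz
    exact ⟨key x hxV z hz, key z hz x hxV⟩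
  · rintro x y z - - - ⟨N1, h1⟩ ⟨N2, h2⟩
    refine ⟨N1 + N2, fun N hN => ?_⟩
    obtain ⟨p, B, hp0, hpN, hp⟩ := h1 N1 le_rfl
    obtain ⟨q, C, hq0, hqN, hq⟩ := h2 (N - N1) (by omega)
    refine ⟨fun i => if i < N1 then p i else q (i - N1), fun i => if i < N1 then B i else C (i - N1),
      ?_, ?_, ?_⟩
    · by_cases h : 0 < N1
      · simp [h, hp0]
      · have : N1 = 0 := by omega
        subst this
        simp [hq0, ← hp0, hpN]
    · have : ¬ N < N1 := by omega
      simp [this, hqN]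
    · intro i hi
      by_cases h : i < N1
      · obtain ⟨a1, a2, a3, a4, a5, a6⟩ := hp i h
        simp only [h, if_true]
        refine ⟨a1, a2, a3, a4, ?_, a6⟩
        by_cases h' : i + 1 < N1
        · simpa [h'] using a5
        · have : i + 1 = N1 := by omega
          have e0 : q (i + 1 - N1) = p (i + 1) := by rw [this, Nat.sub_self, hq0, hpN]
          rw [if_neg h', e0]; exact a5
      · obtain ⟨a1, a2, a3, a4, a5, a6⟩ := hq (i - N1) (by omega)
        have h' : ¬ i + 1 < N1 := by omega
        simp only [h, h', if_false]
        refine ⟨a1, a2, a3, a4, ?_, a6⟩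
        rwa [show i + 1 - N1 = i - N1 + 1 by omega]

theorem refine_chn {X : Type*} [MetricSpace X] [LocallyConnectedSpace X] {U : Set X}
    {ε δ : ℝ} (hδ : 0 < δ) (hε : 0 ≤ ε) {x y : X} {M : ℕ} {p : ℕ → X} {B : ℕ → Set X}
    (h : IsChn U ε x y M p B) :
    ∃ N > 0, ∃ q C, IsChn U δ x y (M * N) q C ∧ ∀ k ≤ M * N, dist (q k) (p (k / N)) ≤ ε := by
  obtain ⟨h0, hM, hi⟩ := h
  have h1 : ∀ i ∈ Finset.range M, ∀ᶠ N in atTop, ∃ q C, IsChn (B i) δ (p i) (p (i+1)) N q C := by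
    intro i hi'
    obtain ⟨a1, a2, a3, a4, a5, a6⟩ := hi i (Finset.mem_range.1 hi')
    obtain ⟨N0, hN0⟩ := exists_chn a1 a2 hδ a4 a5
    exact eventually_atTop.2 ⟨N0, hN0⟩
  have h2 := (Filter.eventually_all_finset (Finset.range M)).2 h1
  obtain ⟨N, hN, hNpos⟩ := (h2.and (eventually_gt_atTop 0)).exists
  have h3 : ∀ i, ∃ q C, i < M → IsChn (B i) δ (p i) (p (i+1)) N q C := by
    intro i
    by_cases hiM : i < M
    · obtain ⟨q, C, h⟩ := hN i (Finset.mem_range.2 hiM)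
      exact ⟨q, C, fun _ => h⟩
    · exact ⟨p, B, fun h => (hiM h).elim⟩
  choose q C hq using h3
  let Q : ℕ → X := fun k => if k < M * N then q (k / N) (k % N) else y
  have hQ : ∀ i ≤ M, Q (i * N) = p i := by
    intro i hiM
    by_cases h : i < M
    · have : i * N < M * N := Nat.mul_lt_mul_of_pos_right h hNpos
      simp only [Q, this, if_true, Nat.mul_div_cancel _ hNpos, Nat.mul_mod_left]
      exact (hq i h).1
    · have : i = M := by omega
      subst this
      simp [Q, hM]
  refine ⟨N, hNpos, Q, fun k => C (k / N) (k % N), ⟨?_, ?_, ?_⟩, ?_⟩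
  · have := hQ 0 (Nat.zero_le _); rwa [zero_mul, h0] at this
  · simp [Q]
  · intro k hk
    have hkM : k / N < M := Nat.div_lt_of_lt_mul (by rwa [mul_comm])
    have hkN : k % N < N := Nat.mod_lt _ hNpos
    obtain ⟨b0, bN, b⟩ := hq (k / N) hkM
    obtain ⟨a1, a2, a3, a4, a5, a6⟩ := b (k % N) hkN
    refine ⟨a1, a2, a3.trans (hi _ hkM).2.2.1, ?_, ?_, a6⟩
    · simpa [Q, hk] using a4
    · have hdm := Nat.div_add_mod k N
      by_cases hlast : k % N + 1 = N
      · have e : k + 1 = (k / N + 1) * N := by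
          rw [add_mul, one_mul, mul_comm]; omega
        rw [e, hQ _ hkM, ← bN]
        simpa [hlast] using a5
      · have hlt : k % N + 1 < N := by omega
        have e : k + 1 = (k % N + 1) + N * (k / N) := by omega
        have e1 : (k + 1) / N = k / N := by
          rw [e, Nat.add_mul_div_left _ _ hNpos, Nat.div_eq_of_lt hlt, zero_add]
        have e2 : (k + 1) % N = k % N + 1 := by
          rw [e, Nat.add_mul_mod_self_left, Nat.mod_eq_of_lt hlt]
        have hk1 : k + 1 < M * N := by
          have : k / N + 1 ≤ M := hkM
          have := Nat.mul_le_mul_left N this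
          rw [mul_comm M N]
          rw [mul_add] at this
          omega
        simp only [Q, hk1, if_true, e1, e2]
        exact a5
  · intro k hk
    rcases hk.lt_or_eq with hk | rfl
    · have hkM : k / N < M := Nat.div_lt_of_lt_mul (by rwa [mul_comm])
      have hkN : k % N < N := Nat.mod_lt _ hNpos
      obtain ⟨b0, bN, b⟩ := hq (k / N) hkM
      obtain ⟨a1, a2, a3, a4, a5, a6⟩ := b (k % N) hkN
      obtain ⟨c1, c2, c3, c4, c5, c6⟩ := hi _ hkM
      simp only [Q, hk, if_true]
      exact c6 _ (a3 a4) _ c4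
    · simp [Q, Nat.mul_div_cancel _ hNpos, hM, hε]

theorem joinedIn_closure {X : Type*} [MetricSpace X] [CompleteSpace X] [LocallyConnectedSpace X]
    {U : Set X} (oU : IsOpen U) (cU : IsConnected U) {x y : X} (hx : x ∈ U) (hy : y ∈ U) :
    JoinedIn (closure U) x y := by
  let S (n : ℕ) := {s : ℕ × (ℕ → X) × (ℕ → Set X) // 0 < s.1 ∧ IsChn U ((1/2)^n) x y s.1 s.2.1 s.2.2}
  have init : Nonempty (S 0) := by
    obtain ⟨N0, h⟩ := exists_chn oU cU (ε := (1/2)^0) (by norm_num) hx hy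
    obtain ⟨p, B, h⟩ := h (N0 + 1) (by omega)
    exact ⟨⟨(N0+1, p, B), by simp, h⟩⟩
  have step : ∀ n (s : S n), ∃ s' : S (n+1), ∃ N > 0, s'.1.1 = s.1.1 * N ∧
      ∀ k ≤ s.1.1 * N, dist (s'.1.2.1 k) (s.1.2.1 (k / N)) ≤ (1/2)^n := by
    rintro n ⟨⟨M, p, B⟩, hM, h⟩
    obtain ⟨N, hN, q, C, h1, h2⟩ := refine_chn (δ := (1/2)^(n+1)) (by positivity) (by positivity) h
    exact ⟨⟨(M * N, q, C), Nat.mul_pos hM hN, h1⟩, N, hN, rfl, h2⟩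
  choose nxt hnxt using step
  let s : ∀ n, S n := fun n => Nat.rec (Classical.choice init) (fun n t => nxt n t) n
  have hs : ∀ n, s (n+1) = nxt n (s n) := fun n => rfl
  let M : ℕ → ℕ := fun n => (s n).1.1
  let p : ℕ → ℕ → X := fun n => (s n).1.2.1
  have hMpos : ∀ n, 0 < M n := fun n => (s n).2.1
  have hch : ∀ n, IsChn U ((1/2)^n) x y (M n) (p n) (s n).1.2.2 := fun n => (s n).2.2
  have hlink : ∀ n, ∃ N > 0, M (n+1) = M n * N ∧
      ∀ k ≤ M n * N, dist (p (n+1) k) (p n (k / N)) ≤ (1/2)^n := fun n => by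
    have := hnxt n (s n)
    rw [← hs] at this
    exact this
  let g : ℕ → unitInterval → X := fun n t => p n ⌊(t : ℝ) * M n⌋₊
  have hfl : ∀ n (t : unitInterval), ⌊(t : ℝ) * M n⌋₊ ≤ M n := by
    intro n t
    have : (t : ℝ) * M n ≤ M n := mul_le_of_le_one_left (Nat.cast_nonneg _) t.2.2
    exact Nat.floor_le_of_le this
  have hpU : ∀ n, ∀ k ≤ M n, p n k ∈ U := by
    intro n k hk
    rcases hk.lt_or_eq with hk | rfl
    · obtain ⟨a1, a2, a3, a4, a5, a6⟩ := (hch n).2.2 k hk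
      exact a3 a4
    · rw [(hch n).2.1]; exact hy
  have hgd : ∀ t n, dist (g n t) (g (n+1) t) ≤ 1 * (1/2)^n := by
    intro t n
    obtain ⟨N, hN, hMN, h⟩ := hlink n
    have hk : ⌊(t : ℝ) * M (n+1)⌋₊ ≤ M n * N := hMN ▸ hfl (n+1) t
    have := h _ hk
    have e : ⌊(t : ℝ) * M (n+1)⌋₊ / N = ⌊(t : ℝ) * M n⌋₊ := by
      rw [← Nat.floor_div_natCast, hMN]
      congr 1
      push_cast
      have : (N : ℝ) ≠ 0 := by positivity
      field_simp
    rw [e] at this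
    rw [dist_comm, one_mul]
    exact this
  have hlim : ∀ t, ∃ z, Tendsto (fun n => g n t) atTop (𝓝 z) := fun t =>
    cauchySeq_tendsto_of_complete (cauchySeq_of_le_geometric (1/2) 1 (by norm_num) (hgd t))
  choose G hG using hlim
  have hGd : ∀ n t, dist (g n t) (G t) ≤ 2 * (1/2)^n := by
    intro n t
    have := dist_le_of_le_geometric_of_tendsto (1/2) 1 (by norm_num) (hgd t) (hG t) n
    have e : 1 * (1/2:ℝ)^n / (1 - 1/2) = 2 * (1/2)^n := by ring
    linarith
  have hstep : ∀ n i j, i ≤ M n → j ≤ M n → i ≤ j → j ≤ i + 1 → dist (p n i) (p n j) ≤ (1/2)^n := by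
    intro n i j hi hj hij hji
    rcases hij.lt_or_eq with h | rfl
    · have : j = i + 1 := by omega
      subst this
      obtain ⟨a1, a2, a3, a4, a5, a6⟩ := (hch n).2.2 i (by omega)
      exact a6 _ a4 _ a5
    · simp
  have hcl : ∀ n (s t : unitInterval), (s:ℝ) ≤ t → (t:ℝ) - s < 1 / M n → dist (g n s) (g n t) ≤ (1/2)^n := by
    intro n s t hst hlt
    have hM0 : (0:ℝ) < M n := by exact_mod_cast hMpos n
    rw [lt_div_iff₀ hM0] at hlt
    refine hstep n _ _ (hfl n s) (hfl n t) (Nat.floor_mono (by gcongr)) ?_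
    rw [← Nat.floor_add_one (mul_nonneg s.2.1 hM0.le)]
    exact Nat.floor_mono (by linarith)
  have hGc : Continuous G := by
    rw [Metric.continuous_iff]
    intro t ε hε
    obtain ⟨n, hn⟩ := exists_pow_lt_of_lt_one (show 0 < ε / 5 by positivity) (show (1/2:ℝ) < 1 by norm_num)
    have hM0 : (0:ℝ) < M n := by exact_mod_cast hMpos n
    refine ⟨1 / M n, by positivity, fun s hs => ?_⟩
    have h1 : dist (g n s) (g n t) ≤ (1/2)^n := by
      rw [Subtype.dist_eq, Real.dist_eq, abs_lt] at hs
      rcases le_total (s:ℝ) t with h | h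
      · exact hcl n s t h (by linarith)
      · rw [dist_comm]; exact hcl n t s h (by linarith)
    have h2 := hGd n s
    have h3 := hGd n t
    have h4 := dist_triangle4 (G s) (g n s) (g n t) (G t)
    rw [dist_comm (G s) (g n s)] at h4
    linarith
  have hG0 : G 0 = x := tendsto_nhds_unique (hG 0) (by
    have : (fun n => g n 0) = fun _ => x := by
      ext n; simp only [g]; simpa using (hch n).1
    rw [this]; exact tendsto_const_nhds)
  have hG1 : G 1 = y := tendsto_nhds_unique (hG 1) (by
    have : (fun n => g n 1) = fun _ => y := by
      ext n; simp only [g]; simpa using (hch n).2.1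
    rw [this]; exact tendsto_const_nhds)
  refine ⟨⟨⟨G, hGc⟩, hG0, hG1⟩, fun t => ?_⟩
  exact mem_closure_of_tendsto (hG t) (Eventually.of_forall fun n => hpU n _ (hfl n t))

theorem locallyPathConnected_of_complete {X : Type*} [MetricSpace X] [CompleteSpace X]
    [LocallyConnectedSpace X] : LocallyPathConnectedSpace X := by
  rw [locallyPathConnectedSpace_iff_pathComponentIn_mem_nhds]
  intro x u hu hx
  obtain ⟨ε, hε, hb⟩ := Metric.isOpen_iff.1 hu x hx
  have hxb : x ∈ Metric.ball x (ε/2) := Metric.mem_ball_self (by positivity)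
  set V := connectedComponentIn (Metric.ball x (ε/2)) x with hV
  have oV : IsOpen V := Metric.isOpen_ball.connectedComponentIn
  have cV : IsConnected V := isConnected_connectedComponentIn_iff.2 hxb
  have hxV : x ∈ V := mem_connectedComponentIn hxb
  have hVs : closure V ⊆ u := by
    refine (closure_mono (connectedComponentIn_subset _ _)).trans ?_
    refine Metric.closure_ball_subset_closedBall.trans ?_
    exact (Metric.closedBall_subset_ball (by linarith)).trans hb
  filter_upwards [oV.mem_nhds hxV] with z hz
  exact (joinedIn_closure oV cV hxV hz).mono hVs

theorem exists_avoid {K : Finset (Submodule ℝ ℂ)} (hK : ∀ L ∈ K, L ≠ ⊤) (b : ℂ) {ε : ℝ} (hε : 0 < ε) :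
    ∃ c, dist c b < ε ∧ ∀ L ∈ K, c ∉ L := by
  by_contra hcon
  push Not at hcon
  have h1 : Metric.ball b ε ⊆ ⋃ L ∈ K, (L : Set ℂ) := by
    intro c hc
    obtain ⟨L, hL, h⟩ := hcon c hc
    exact mem_iUnion₂.2 ⟨L, hL, h⟩
  have h2 : MeasureTheory.volume (⋃ L ∈ K, (L : Set ℂ)) = 0 := by
    refine (MeasureTheory.measure_biUnion_null_iff K.countable_toSet).2 ?_
    intro L hL
    exact MeasureTheory.Measure.addHaar_submodule _ L (hK L hL)
  have h3 := MeasureTheory.measure_mono_null h1 h2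
  exact (Metric.measure_ball_pos MeasureTheory.volume b hε).ne' h3

theorem span_singleton_ne_top (c : ℂ) : Submodule.span ℝ {c} ≠ ⊤ := by
  intro h
  have h1 : Module.finrank ℝ (Submodule.span ℝ ({c} : Set ℂ)) ≤ 1 := finrank_span_le_card ({c} : Set ℂ) |>.trans (by simp)
  rw [h, finrank_top, Complex.finrank_real_complex] at h1
  omega

theorem exists_general_position {ι : Type*} [DecidableEq ι] (b : ι → ℂ) {ε : ℝ} (hε : 0 < ε) (s : Finset ι) :
    ∃ c : ι → ℂ, (∀ i ∈ s, dist (c i) (b i) < ε ∧ c i ≠ 0) ∧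
      ∀ i ∈ s, ∀ j ∈ s, i ≠ j → ∀ x y : ℝ, x • c i + y • c j = 0 → x = 0 ∧ y = 0 := by
  classical
  induction s using Finset.induction_on with
  | empty => exact ⟨b, by simp, by simp⟩
  | insert a s ha ih =>
    obtain ⟨c, h1, h2⟩ := ih
    obtain ⟨z, hz, hz'⟩ := exists_avoid (K := insert ⊥ (s.image fun i => Submodule.span ℝ {c i})) (by
      intro L hL
      rcases Finset.mem_insert.1 hL with rfl | hL
      · exact bot_ne_top
      · obtain ⟨i, _, rfl⟩ := Finset.mem_image.1 hL
        exact span_singleton_ne_top _) (b a) hε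
    have hz0 : z ≠ 0 := by
      have := hz' ⊥ (Finset.mem_insert_self _ _)
      simpa using this
    have hzs : ∀ i ∈ s, z ∉ Submodule.span ℝ {c i} := fun i hi =>
      hz' _ (Finset.mem_insert_of_mem (Finset.mem_image_of_mem _ hi))
    have key : ∀ i ∈ s, ∀ x y : ℝ, x • z + y • c i = 0 → x = 0 ∧ y = 0 := by
      intro i hi x y h
      have hx : x = 0 := by
        by_contra hx
        apply hzs i hi
        rw [Submodule.mem_span_singleton]
        refine ⟨-(x⁻¹ * y), ?_⟩
        have : y • c i = - (x • z) := by rw [eq_neg_iff_add_eq_zero, add_comm]; exact h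
        rw [neg_smul, mul_smul, this, smul_neg, neg_neg, smul_smul, inv_mul_cancel₀ hx, one_smul]
      subst hx
      refine ⟨rfl, ?_⟩
      rw [zero_smul, zero_add] at h
      exact (smul_eq_zero.1 h).resolve_right (h1 i hi).2
    have hne : ∀ i ∈ s, i ≠ a := fun i hi h => ha (h ▸ hi)
    refine ⟨Function.update c a z, ?_, ?_⟩
    · intro i hi
      rcases Finset.mem_insert.1 hi with rfl | hi
      · simpa using ⟨hz, hz0⟩
      · simpa [Function.update_of_ne (hne i hi)] using h1 i hi
    · intro i hi j hj hij x y h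
      rcases Finset.mem_insert.1 hi with hia | hi' <;> rcases Finset.mem_insert.1 hj with hja | hj'
      · exact (hij (hia.trans hja.symm)).elim
      · rw [hia, Function.update_self, Function.update_of_ne (hne j hj')] at h
        exact key j hj' x y h
      · rw [hja, Function.update_self, Function.update_of_ne (hne i hi'), add_comm] at h
        exact (key i hi' y x h).symm
      · rw [Function.update_of_ne (hne j hj'), Function.update_of_ne (hne i hi')] at h
        exact h2 i hi' j hj' hij x y h

theorem approx_nonvanishing {X : Type*} [MetricSpace X] [CompactSpace X] (hdim : CovDimLE X 1)
    (g : C(X, ℂ)) : ∃ g' : C(X, ℂ), ∀ x, g' x ≠ 0 ∧ ‖g' x - g x‖ ≤ 1/2 := by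
  classical
  obtain ⟨t, -, ht, hcov⟩ := (finite_cover_balls_of_compact (isCompact_range g.continuous) (show (0:ℝ) < 1/4 by norm_num))
  obtain ⟨V, hVf, hVo, hVu, hVr, hVc⟩ := hdim ((fun z => g ⁻¹' Metric.ball z (1/4)) '' t) (ht.image _) (by
    rintro _ ⟨z, _, rfl⟩; exact Metric.isOpen_ball.preimage g.continuous) (by
    rw [eq_univ_iff_forall]; intro x
    obtain ⟨z, hz, h⟩ := mem_iUnion₂.1 (hcov (mem_range_self x))
    exact ⟨_, ⟨z, hz, rfl⟩, h⟩)
  have : Fintype V := hVf.fintype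
  have hb : ∀ v : V, ∃ z : ℂ, ∀ x ∈ v.1, dist (g x) z < 1/4 := by
    intro v
    obtain ⟨_, ⟨z, _, rfl⟩, h⟩ := hVr v.1 v.2
    exact ⟨z, fun x hx => h hx⟩
  choose b hb using hb
  obtain ⟨c, hc1, hc2⟩ := exists_general_position b (show (0:ℝ) < 1/4 by norm_num) Finset.univ
  obtain ⟨φ, hφ⟩ := PartitionOfUnity.exists_isSubordinate (X := X) isClosed_univ (fun v : V => v.1) (fun v => hVo v.1 v.2) (by
    intro x _
    have : x ∈ ⋃₀ V := hVu ▸ mem_univ x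
    obtain ⟨v, hv, hx⟩ := this
    exact mem_iUnion.2 ⟨⟨v, hv⟩, hx⟩)
  have hsum : ∀ x, ∑ v, φ v x = 1 := by
    intro x
    rw [← finsum_eq_sum_of_fintype]; exact φ.sum_eq_one (mem_univ x)
  have hmem : ∀ v x, φ v x ≠ 0 → x ∈ v.1 := fun v x h => hφ v (subset_tsupport _ h)
  refine ⟨⟨fun x => ∑ v, φ v x • c v, by fun_prop⟩, fun x => ⟨?_, ?_⟩⟩
  · change ∑ v, φ v x • c v ≠ 0
    set T := Finset.univ.filter (fun v => φ v x ≠ 0) with hT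
    have hs1 : ∑ v ∈ T, φ v x • c v = ∑ v, φ v x • c v := by
      apply Finset.sum_subset (Finset.subset_univ _)
      intro v _ hv
      have : φ v x = 0 := by simpa [hT] using hv
      simp [this]
    have hcard : T.card ≤ 2 := by
      have h1 : T.image Subtype.val ⊆ (hVf.subset (sep_subset V (fun v => x ∈ v))).toFinset := by
        intro v hv
        obtain ⟨v, hv, rfl⟩ := Finset.mem_image.1 hv
        simp only [Finite.mem_toFinset]
        exact ⟨v.2, hmem v x (by simpa [hT] using hv)⟩
      have h2 := Finset.card_le_card h1
      rw [Finset.card_image_of_injective _ Subtype.val_injective, ← ncard_eq_toFinset_card _ (hVf.subset (sep_subset V (fun v => x ∈ v)))] at h2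
      exact h2.trans (hVc x)
    have hmT : ∀ v ∈ T, φ v x ≠ 0 := fun v hv => by simpa [hT] using hv
    rw [← hs1]
    have hpos : T.card ≠ 0 := by
      intro h
      rw [Finset.card_eq_zero] at h
      have : ∀ v, φ v x = 0 := by
        intro v
        by_contra hv
        have : v ∈ T := by simp [hT, hv]
        simp [h] at this
      have h1 := hsum x
      simp [this] at h1
    have : T.card = 1 ∨ T.card = 2 := by omega
    rcases this with h | h
    · obtain ⟨v, hv⟩ := Finset.card_eq_one.1 h
      rw [hv, Finset.sum_singleton]
      exact smul_ne_zero (hmT v (by simp [hv])) (hc1 v (Finset.mem_univ _)).2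
    · obtain ⟨v, w, hvw, hv⟩ := Finset.card_eq_two.1 h
      rw [hv, Finset.sum_pair hvw]
      intro h0
      exact hmT v (by simp [hv]) (hc2 v (Finset.mem_univ _) w (Finset.mem_univ _) hvw _ _ h0).1
  · change ‖∑ v, φ v x • c v - g x‖ ≤ 1/2
    have e : ∑ v, φ v x • c v - g x = ∑ v, φ v x • (c v - g x) := by
      simp only [smul_sub, Finset.sum_sub_distrib]
      rw [← Finset.sum_smul, hsum, one_smul]
    rw [e]
    refine (norm_sum_le _ _).trans ?_
    calc ∑ v, ‖φ v x • (c v - g x)‖ ≤ ∑ v, φ v x * (1/2) := by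
          refine Finset.sum_le_sum fun v _ => ?_
          rw [norm_smul, Real.norm_of_nonneg (φ.nonneg v x)]
          by_cases h : φ v x = 0
          · simp [h]
          · refine mul_le_mul_of_nonneg_left ?_ (φ.nonneg v x)
            have h1 := hb v x (hmem v x h)
            have h2 := (hc1 v (Finset.mem_univ _)).1
            rw [← dist_eq_norm]
            linarith [dist_triangle_right (c v) (g x) (b v)]
      _ = 1/2 := by rw [← Finset.sum_mul, hsum, one_mul]

theorem circle_ext {X : Type*} [MetricSpace X] [CompactSpace X] (hdim : CovDimLE X 1) {A : Set X}
    (hA : IsClosed A) (f : C(A, Circle)) : ∃ F : C(X, Circle), ∀ a : A, F a = f a := by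
  obtain ⟨g, hg⟩ := ContinuousMap.exists_restrict_eq hA (⟨fun a => (f a : ℂ), by fun_prop⟩ : C(A, ℂ))
  have hg : ∀ a : A, g a = f a := fun a => congrArg (fun h : C(A, ℂ) => h a) hg
  obtain ⟨g', hg'⟩ := approx_nonvanishing hdim g
  have hre : ∀ a : A, g' a / (f a : ℂ) ∈ Complex.slitPlane := by
    intro a
    left
    have h1 := (hg' a).2
    rw [hg] at h1
    have h2 : ‖g' a / (f a : ℂ) - 1‖ ≤ 1/2 := by
      have : g' a / (f a : ℂ) - 1 = (g' a - f a) / f a := by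
        rw [sub_div, div_self (Circle.coe_ne_zero _)]
      rw [this, norm_div, Circle.norm_coe, div_one]; exact h1
    have h3 := (abs_le.1 ((Complex.abs_re_le_norm _).trans h2)).1
    simp only [Complex.sub_re, Complex.one_re] at h3
    linarith
  obtain ⟨Θ, hΘ⟩ := ContinuousMap.exists_restrict_eq hA (⟨fun a => Complex.arg (g' a / (f a : ℂ)), by
    rw [continuous_iff_continuousAt]
    intro a
    refine ContinuousAt.comp (g := Complex.arg) (Complex.continuousAt_arg (hre a)) ?_
    apply Continuous.continuousAt
    exact (g'.continuous.comp continuous_subtype_val).div (by fun_prop) (fun a => Circle.coe_ne_zero _)⟩ : C(A, ℝ))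
  have hΘ : ∀ a : A, Θ a = Complex.arg (g' a / (f a : ℂ)) := fun a => congrArg (fun h : C(A, ℝ) => h a) hΘ
  have hn : ∀ x, ‖g' x / ‖g' x‖‖ = 1 := by
    intro x
    have := norm_ne_zero_iff.2 (hg' x).1
    simp [this]
  let u : C(X, Circle) := ⟨fun x => ⟨g' x / ‖g' x‖, by simpa [Submonoid.unitSphere] using hn x⟩, by
    refine Continuous.subtype_mk ?_ _
    refine g'.continuous.div (by fun_prop) fun x => ?_
    exact_mod_cast norm_ne_zero_iff.2 (hg' x).1⟩
  refine ⟨⟨fun x => u x * Circle.exp (-Θ x), by fun_prop⟩, fun a => ?_⟩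
  apply Circle.ext
  change ((u a * Circle.exp (-Θ a) : Circle) : ℂ) = f a
  rw [Circle.coe_mul, Circle.coe_exp, hΘ]
  change g' a / ‖g' a‖ * _ = _
  have h1 := Complex.norm_mul_exp_arg_mul_I (g' a / (f a : ℂ))
  rw [norm_div, Circle.norm_coe, div_one] at h1
  have h2 : (‖g' a‖ : ℂ) ≠ 0 := by exact_mod_cast norm_ne_zero_iff.2 (hg' a).1
  have h3 := Circle.coe_ne_zero (f a)
  have h4 : g' (a:X) ≠ 0 := (hg' a).1
  push_cast
  rw [neg_mul, Complex.exp_neg]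
  set E := Complex.exp (Complex.arg (g' a / (f a : ℂ)) * Complex.I) with hE
  have h5 : E ≠ 0 := Complex.exp_ne_zero _
  field_simp
  rw [eq_div_iff h3] at h1
  linear_combination (-1) * h1

section Deg
variable {X : Type*} [TopologicalSpace X]

theorem exists_cLift (F : C(X, Circle)) {x y : X} (γ : Path x y) :
    ∃ Γ : C(unitInterval, ℝ), ∀ t, Circle.exp (Γ t) = F (γ t) := by
  obtain ⟨Γ, h, -⟩ := Circle.isCoveringMap_exp.exists_path_lifts (F.comp γ.toContinuousMap)
    (Complex.arg (F x)) (by simp [Circle.exp_arg])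
  exact ⟨Γ, fun t => congrFun h t⟩

/-- a chosen lift of a path -/
noncomputable def cLift (F : C(X, Circle)) {x y : X} (γ : Path x y) : C(unitInterval, ℝ) :=
  (exists_cLift F γ).choose

theorem cLift_spec (F : C(X, Circle)) {x y : X} (γ : Path x y) (t) :
    Circle.exp (cLift F γ t) = F (γ t) := (exists_cLift F γ).choose_spec t

/-- total variation of argument along a path -/
noncomputable def cDel (F : C(X, Circle)) {x y : X} (γ : Path x y) : ℝ :=
  cLift F γ 1 - cLift F γ 0

theorem cDel_eq (F : C(X, Circle)) {x y : X} (γ : Path x y) {Γ : unitInterval → ℝ}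
    (hc : Continuous Γ) (h : ∀ t, Circle.exp (Γ t) = F (γ t)) : cDel F γ = Γ 1 - Γ 0 := by
  have key : (fun t => Γ t - Γ 0 + cLift F γ 0) = cLift F γ := by
    refine Circle.isCoveringMap_exp.eq_of_comp_eq (by fun_prop) (by fun_prop) ?_ 0 (by simp)
    funext t
    simp only [Function.comp_apply]
    rw [Circle.exp_add, Circle.exp_sub, h, h, cLift_spec, cLift_spec, div_mul_cancel]
  have h1 := congrFun key 1
  rw [cDel, ← h1]; ring

theorem cDel_homotopic (F : C(X, Circle)) {x y : X} {γ γ' : Path x y} (h : γ.Homotopic γ') :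
    cDel F γ = cDel F γ' := by
  have h0 : (F.comp γ.toContinuousMap) 0 = Circle.exp (Complex.arg (F x)) := by simp [Circle.exp_arg]
  have h0' : (F.comp γ'.toContinuousMap) 0 = Circle.exp (Complex.arg (F x)) := by simp [Circle.exp_arg]
  have h1 := Circle.isCoveringMap_exp.liftPath_apply_one_eq_of_homotopicRel
    (γ₀ := F.comp γ.toContinuousMap) (γ₁ := F.comp γ'.toContinuousMap) ?_ (Complex.arg (F x)) h0 h0'
  · rw [cDel_eq F γ (Circle.isCoveringMap_exp.liftPath _ _ h0).continuous
      (fun t => congrFun (Circle.isCoveringMap_exp.liftPath_lifts _ _ h0) t),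
      cDel_eq F γ' (Circle.isCoveringMap_exp.liftPath _ _ h0').continuous
      (fun t => congrFun (Circle.isCoveringMap_exp.liftPath_lifts _ _ h0') t), h1,
      Circle.isCoveringMap_exp.liftPath_zero, Circle.isCoveringMap_exp.liftPath_zero]
  · obtain ⟨H⟩ := h
    exact ⟨ContinuousMap.HomotopyRel.compContinuousMap H F⟩

theorem cDel_trans (F : C(X, Circle)) {x y z : X} (γ : Path x y) (γ' : Path y z) :
    cDel F (γ.trans γ') = cDel F γ + cDel F γ' := by
  let a : Path (cLift F γ 0) (cLift F γ 1) := ⟨cLift F γ, rfl, rfl⟩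
  let b : Path (cLift F γ 1) (cLift F γ' 1 - cLift F γ' 0 + cLift F γ 1) :=
    ⟨⟨fun t => cLift F γ' t - cLift F γ' 0 + cLift F γ 1, by fun_prop⟩, by simp, rfl⟩
  rw [cDel_eq F (γ.trans γ') (Γ := a.trans b) (a.trans b).continuous]
  · rw [Path.target, Path.source, cDel, cDel]; ring
  · intro t
    rw [Path.trans_apply, Path.trans_apply]
    split_ifs
    · exact cLift_spec F γ _
    · change Circle.exp (cLift F γ' _ - cLift F γ' 0 + cLift F γ 1) = _
      rw [Circle.exp_add, Circle.exp_sub, cLift_spec, cLift_spec, cLift_spec, γ'.source, γ.target,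
        div_mul_cancel]

theorem cDel_symm (F : C(X, Circle)) {x y : X} (γ : Path x y) : cDel F γ.symm = - cDel F γ := by
  rw [cDel_eq F γ.symm (Γ := fun t => cLift F γ (unitInterval.symm t)) (by fun_prop)
    (fun t => cLift_spec F γ _), cDel]
  simp

theorem cDel_branch (F : C(X, Circle)) {x y : X} (γ : Path x y) (w : Circle)
    (h : ∀ t, ((F (γ t) / w : Circle) : ℂ) ∈ Complex.slitPlane) :
    cDel F γ = Complex.arg (F y / w : Circle) - Complex.arg (F x / w : Circle) := by
  rw [cDel_eq F γ (Γ := fun t => Complex.arg (F (γ t) / w : Circle) + Complex.arg w) ?_ ?_]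
  · simp
  · refine Continuous.add ?_ continuous_const
    rw [continuous_iff_continuousAt]
    intro t
    refine ContinuousAt.comp (g := Complex.arg) (Complex.continuousAt_arg (h t)) ?_
    apply Continuous.continuousAt
    fun_prop
  · intro t
    rw [Circle.exp_add, Circle.exp_arg, Circle.exp_arg, div_mul_cancel]

/-- induced map on the fundamental group -/
noncomputable def qDel (F : C(X, Circle)) (x : X) : FundamentalGroup X x → ℝ :=
  fun g => Quotient.lift (s := Path.Homotopic.setoid x x) (fun γ => cDel F γ)
    (fun _ _ h => cDel_homotopic F h) (FundamentalGroup.toPath g)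

theorem qDel_mk (F : C(X, Circle)) {x : X} (γ : Path x x) :
    qDel F x (FundamentalGroup.fromPath (Path.Homotopic.Quotient.mk γ)) = cDel F γ := rfl

theorem fg_ind {x : X} {p : FundamentalGroup X x → Prop}
    (h : ∀ γ : Path x x, p (FundamentalGroup.fromPath (Path.Homotopic.Quotient.mk γ))) (g) : p g := by
  obtain ⟨γ, hγ⟩ := Path.Homotopic.Quotient.mk_surjective (FundamentalGroup.toPath g)
  have := h γ
  rw [hγ] at this
  exact this

theorem qDel_mul (F : C(X, Circle)) {x : X} (g g' : FundamentalGroup X x) :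
    qDel F x (g * g') = qDel F x g + qDel F x g' := by
  induction g using fg_ind with | _ γ
  induction g' using fg_ind with | _ γ'
  rw [FundamentalGroup.mul_def]
  change qDel F x (FundamentalGroup.fromPath ((Path.Homotopic.Quotient.mk γ').trans (Path.Homotopic.Quotient.mk γ))) = _
  rw [← Path.Homotopic.Quotient.mk_trans, qDel_mk, qDel_mk, qDel_mk, cDel_trans, add_comm]

theorem qDel_one (F : C(X, Circle)) {x : X} : qDel F x 1 = 0 := by
  have := qDel_mul F (1 : FundamentalGroup X x) 1
  rw [one_mul] at this; linarith

theorem qDel_inv (F : C(X, Circle)) {x : X} (g : FundamentalGroup X x) : qDel F x g⁻¹ = - qDel F x g := by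
  have := qDel_mul F g g⁻¹
  rw [mul_inv_cancel, qDel_one] at this; linarith

theorem exists_finite_span {x : X} (hfg : Group.FG (FundamentalGroup X x)) :
    ∃ (T : Finset C(X, Circle)), ∀ g : FundamentalGroup X x,
      (∀ F ∈ T, qDel F x g = 0) → ∀ F, qDel F x g = 0 := by
  classical
  obtain ⟨S, hS⟩ := Group.fg_def.1 hfg
  let v : C(X, Circle) → (S → ℝ) := fun F s => qDel F x s
  obtain ⟨T, hT, hTs⟩ := (Submodule.fg_span_iff_fg_span_finset_subset (R := ℝ) (range v)).1 (IsNoetherian.noetherian _)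
  have hT' : ∀ u ∈ T, ∃ F, v F = u := fun u hu => hT hu
  choose! f hf using hT'
  refine ⟨T.image f, fun g hg F => ?_⟩
  have h1 : v F ∈ Submodule.span ℝ (T : Set (S → ℝ)) := hTs ▸ Submodule.subset_span (mem_range_self F)
  rw [Submodule.mem_span_finset] at h1
  obtain ⟨a, -, ha⟩ := h1
  have key : ∀ g : FundamentalGroup X x, qDel F x g = ∑ u ∈ T, a u * qDel (f u) x g := by
    intro g
    have hg : g ∈ Subgroup.closure (S : Set (FundamentalGroup X x)) := hS ▸ Subgroup.mem_top g
    induction hg using Subgroup.closure_induction with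
    | mem s hs =>
      have := congrFun ha ⟨s, hs⟩
      rw [Finset.sum_apply] at this
      rw [show qDel F x s = v F ⟨s, hs⟩ from rfl, ← this]
      refine Finset.sum_congr rfl fun u hu => ?_
      rw [Pi.smul_apply, smul_eq_mul]
      congr 1
      exact (congrFun (hf u hu) ⟨s, hs⟩).symm
    | one => simp only [qDel_one, mul_zero, Finset.sum_const_zero]
    | mul g g' _ _ h h' => simp only [qDel_mul, h, h', mul_add, Finset.sum_add_distrib]
    | inv g _ h => simp only [qDel_inv, h, mul_neg, Finset.sum_neg_distrib]
  rw [key]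
  refine Finset.sum_eq_zero fun u hu => ?_
  rw [hg _ (Finset.mem_image_of_mem _ hu), mul_zero]
end Deg

theorem exists_small_loops {X : Type*} [MetricSpace X] [CompactSpace X] [PathConnectedSpace X] {x : X}
    (hfg : Group.FG (FundamentalGroup X x)) : ∃ ε > 0, ∀ (F : C(X, Circle)) (y : X) (γ : Path y y),
      (∀ t, dist (γ t) y < ε) → cDel F γ = 0 := by
  obtain ⟨T, hT⟩ := exists_finite_span hfg
  have h1 : ∀ F ∈ T, ∀ᶠ ε in 𝓝[>] (0:ℝ), ∀ a b, dist a b < ε → dist (F a) (F b) < 1 := by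
    intro F _
    have := CompactSpace.uniformContinuous_of_continuous F.continuous
    obtain ⟨δ, hδ, h⟩ := Metric.uniformContinuous_iff.1 this 1 one_pos
    filter_upwards [Ioo_mem_nhdsGT hδ] with ε hε a b hab
    exact h (hab.trans hε.2)
  obtain ⟨ε, hε, hpos⟩ := (((Filter.eventually_all_finset T).2 h1).and self_mem_nhdsWithin).exists
  refine ⟨ε, hpos, fun F y γ hγ => ?_⟩
  have h2 : ∀ F ∈ T, cDel F γ = 0 := by
    intro F hF
    rw [cDel_branch F γ (F y), sub_self]
    intro t
    left
    have h3 := hε F hF _ _ (hγ t)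
    have e : ((F (γ t) / F y : Circle) : ℂ) - 1 = (F (γ t) - F y) / F y := by
      rw [sub_div, div_self (Circle.coe_ne_zero _), Circle.coe_div]
    have h4 : ‖((F (γ t) / F y : Circle) : ℂ) - 1‖ < 1 := by
      rw [e, norm_div, Circle.norm_coe, div_one, ← dist_eq_norm]; exact h3
    have h5 := (abs_lt.1 ((Complex.abs_re_le_norm _).trans_lt h4)).1
    simp only [Complex.sub_re, Complex.one_re] at h5
    linarith
  let c : Path x y := PathConnectedSpace.somePath x y
  have h3 : ∀ F, cDel F ((c.trans γ).trans c.symm) = cDel F γ := by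
    intro F; rw [cDel_trans, cDel_trans, cDel_symm]; ring
  have := hT (FundamentalGroup.fromPath (Path.Homotopic.Quotient.mk ((c.trans γ).trans c.symm))) (fun F hF => by
    rw [qDel_mk, h3, h2 F hF]) F
  rwa [qDel_mk, h3] at this

theorem inter_preconnected {X : Type*} [MetricSpace X] [CompactSpace X] [LocallyPathConnectedSpace X]
    (hdim : CovDimLE X 1) {ε : ℝ} (hε : ∀ (F : C(X, Circle)) (y : X) (γ : Path y y),
      (∀ t, dist (γ t) y < ε) → cDel F γ = 0) {W : Set X} (oW : IsOpen W)
    (hW : ∀ a ∈ W, ∀ b ∈ W, dist a b < ε) {A B : Set X} (hA : IsCompact A) (hA' : IsConnected A)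
    (hB : IsCompact B) (hB' : IsConnected B) (hAW : A ⊆ W) (hBW : B ⊆ W) : IsPreconnected (A ∩ B) := by
  classical
  rw [isPreconnected_closed_iff]
  rintro t t' ht ht' hsub ⟨p, hp, hpt⟩ ⟨q, hq, hqt⟩
  by_contra hcon
  rw [not_nonempty_iff_eq_empty] at hcon
  have hAB : IsClosed (A ∩ B) := hA.isClosed.inter hB.isClosed
  obtain ⟨h, hh0, hh1, hh⟩ := exists_continuous_zero_one_of_isClosed (hAB.inter ht) (hAB.inter ht') (by
    rw [disjoint_iff_inter_eq_empty, ← hcon]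
    ext z; simp only [mem_inter_iff]; tauto)
  let f : X → Circle := fun x => if x ∈ A then Circle.exp (Real.pi * h x) else Circle.exp (-(Real.pi * h x))
  have fA : EqOn f (fun x => Circle.exp (Real.pi * h x)) A := fun x hx => by simp [f, hx]
  have fB : EqOn f (fun x => Circle.exp (-(Real.pi * h x))) B := by
    intro x hx
    by_cases hxA : x ∈ A
    · rcases hsub ⟨hxA, hx⟩ with hxt | hxt
      · have : h x = 0 := hh0 ⟨⟨hxA, hx⟩, hxt⟩
        simp [f, hxA, this]
      · have : h x = 1 := hh1 ⟨⟨hxA, hx⟩, hxt⟩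
        have e : Circle.exp (-Real.pi) = Circle.exp Real.pi := by
          apply Circle.ext
          rw [Circle.coe_exp, Circle.coe_exp]
          push_cast
          rw [neg_mul, Complex.exp_neg, Complex.exp_pi_mul_I]
          norm_num
        simp only [f, hxA, this, if_true, mul_one, e]
    · simp [f, hxA]
  have fc : ContinuousOn f (A ∪ B) := by
    refine ContinuousOn.union_of_isClosed ?_ ?_ hA.isClosed hB.isClosed
    · exact ContinuousOn.congr (by fun_prop) fA
    · exact ContinuousOn.congr (by fun_prop) fB
  obtain ⟨F, hF⟩ := circle_ext hdim (hA.isClosed.union hB.isClosed)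
    ⟨(A ∪ B).domRestrict f, continuousOn_iff_continuous_domRestrict.1 fc⟩
  have hFA : ∀ x ∈ A, F x = Circle.exp (Real.pi * h x) := fun x hx => (hF ⟨x, Or.inl hx⟩).trans (fA hx)
  have hFB : ∀ x ∈ B, F x = Circle.exp (-(Real.pi * h x)) := fun x hx => (hF ⟨x, Or.inr hx⟩).trans (fB hx)
  have hp0 : h p = 0 := hh0 ⟨hp, hpt⟩
  have hq1 : h q = 1 := hh1 ⟨hq, hqt⟩
  have hbd : ∀ C : Set X, IsConnected C → C ⊆ W → p ∈ C → q ∈ C → ∀ w : Circle,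
      (∀ x ∈ C, ((F x / w : Circle) : ℂ) ∈ Complex.slitPlane) →
      ∃ γ : Path p q, (∀ t, γ t ∈ W) ∧ cDel F γ = Complex.arg (F q / w : Circle) - Complex.arg (F p / w : Circle) := by
    intro C hC hCW hpC hqC w hw
    let O : Set X := W ∩ {x | ((F x / w : Circle) : ℂ) ∈ Complex.slitPlane}
    have oO : IsOpen O := oW.inter (Complex.isOpen_slitPlane.preimage (by fun_prop))
    have hCO : C ⊆ O := fun x hx => ⟨hCW hx, hw x hx⟩
    have hc : IsConnected (connectedComponentIn O p) := isConnected_connectedComponentIn_iff.2 (hCO hpC)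
    have hq : q ∈ connectedComponentIn O p := hC.isPreconnected.subset_connectedComponentIn hpC hCO hqC
    obtain ⟨γ, hγ⟩ := ((oO.connectedComponentIn.isConnected_iff_isPathConnected.1 hc).joinedIn p
      (mem_connectedComponentIn (hCO hpC)) q hq).mono (connectedComponentIn_subset _ _)
    exact ⟨γ, fun t => (hγ t).1, cDel_branch F γ w fun t => (hγ t).2⟩
  have hpi := Real.pi_pos
  have hsl : ∀ s : ℝ, -(Real.pi/2) ≤ s → s ≤ Real.pi/2 → ((Circle.exp s : Circle) : ℂ) ∈ Complex.slitPlane := by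
    intro s h1 h2
    rw [Complex.mem_slitPlane_iff_arg, Circle.arg_exp (by linarith) (by linarith)]
    exact ⟨by linarith, Circle.coe_ne_zero _⟩
  obtain ⟨α, hαW, hα⟩ := hbd A hA' hAW hp.1 hq.1 (Circle.exp (Real.pi/2)) (by
    intro x hx
    rw [hFA x hx, ← Circle.exp_sub]
    obtain ⟨h1, h2⟩ := hh x
    exact hsl _ (by nlinarith) (by nlinarith))
  obtain ⟨β, hβW, hβ⟩ := hbd B hB' hBW hp.2 hq.2 (Circle.exp (-(Real.pi/2))) (by
    intro x hx
    rw [hFB x hx, ← Circle.exp_sub]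
    obtain ⟨h1, h2⟩ := hh x
    exact hsl _ (by nlinarith) (by nlinarith))
  have h0 := hε F p (α.trans β.symm) (by
    intro t
    refine hW _ ?_ _ (hAW hp.1)
    rw [Path.trans_apply]
    split_ifs
    · exact hαW _
    · exact hβW _)
  rw [hFA p hp.1, hFA q hq.1, hp0, hq1, ← Circle.exp_sub, ← Circle.exp_sub,
    Circle.arg_exp (by linarith) (by linarith), Circle.arg_exp (by linarith) (by linarith)] at hα
  rw [hFB p hp.2, hFB q hq.2, hp0, hq1, ← Circle.exp_sub, ← Circle.exp_sub,
    Circle.arg_exp (by linarith) (by linarith), Circle.arg_exp (by linarith) (by linarith)] at hβ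
  rw [cDel_trans, cDel_symm, hα, hβ] at h0
  linarith

theorem HUni_of_small {X : Type*} [MetricSpace X] [CompactSpace X] [LocallyPathConnectedSpace X]
    (hdim : CovDimLE X 1) {ε : ℝ} (hε : ∀ (F : C(X, Circle)) (y : X) (γ : Path y y),
      (∀ t, dist (γ t) y < ε) → cDel F γ = 0) {W : Set X} (oW : IsOpen W)
    (hW : ∀ a ∈ W, ∀ b ∈ W, dist a b < ε) : HUni W := by
  intro A B hA hA' hB hB'
  rw [← Topology.IsInducing.subtypeVal.isPreconnected_image, image_inter Subtype.val_injective]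
  exact inter_preconnected hdim hε oW hW (hA.image continuous_subtype_val)
    (hA'.image _ continuous_subtype_val.continuousOn) (hB.image continuous_subtype_val)
    (hB'.image _ continuous_subtype_val.continuousOn) (Subtype.coe_image_subset _ _) (Subtype.coe_image_subset _ _)

theorem ANEOn_of_subtype {X : Type} [MetricSpace X] {W U : Set X} (hUW : U ⊆ W)
    (h : ANEOn (Subtype.val ⁻¹' U : Set W)) : ANEOn U := by
  classical
  intro Y _ Z f hZ hf hm
  rcases Z.eq_empty_or_nonempty with rfl | ⟨z, hz⟩
  · exact ⟨∅, f, isOpen_empty, subset_rfl, continuousOn_empty _, mapsTo_empty _ _, eqOn_empty _ _⟩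
  let f' : Y → W := fun y => if hy : f y ∈ W then ⟨f y, hy⟩ else ⟨f z, hUW (hm hz)⟩
  have hf' : ∀ y ∈ Z, (f' y : X) = f y := fun y hy => by simp [f', hUW (hm hy)]
  obtain ⟨V, g, oV, hZV, hg, hgm, hgf⟩ := h Y Z f' hZ
    (by
      rw [Topology.IsInducing.subtypeVal.continuousOn_iff]
      exact hf.congr hf')
    (fun y hy => by
      change (f' y : X) ∈ U
      rw [hf' y hy]; exact hm hy)
  refine ⟨V, fun y => (g y : X), oV, hZV, continuous_subtype_val.comp_continuousOn hg, fun y hy => hgm hy, fun y hy => ?_⟩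
  change (g y : X) = f y
  rw [hgf hy, hf' y hy]

theorem anr_of_fg {X : Type} [MetricSpace X] [CompactSpace X] [ConnectedSpace X]
    [LocallyConnectedSpace X] (hdim : CovDimLE X 1)
    (h : ∀ x : X, Group.FG (FundamentalGroup X x)) : IsANR X := by
  have : LocallyPathConnectedSpace X := locallyPathConnected_of_complete
  have : PathConnectedSpace X := pathConnectedSpace_iff_connectedSpace.2 inferInstance
  obtain ⟨x0⟩ : Nonempty X := inferInstance
  obtain ⟨ε, hε, hsm⟩ := exists_small_loops (h x0)
  refine ANEOn.isANR (ANEOn.of_local fun x => ?_)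
  have hxW : x ∈ Metric.ball x (ε/2) := Metric.mem_ball_self (by positivity)
  have hxU : x ∈ Metric.ball x (ε/4) := Metric.mem_ball_self (by positivity)
  set W := connectedComponentIn (Metric.ball x (ε/2)) x with hW
  set U := connectedComponentIn (Metric.ball x (ε/8)) x with hU
  have hxU : x ∈ Metric.ball x (ε/8) := Metric.mem_ball_self (by positivity)
  have oW : IsOpen W := Metric.isOpen_ball.connectedComponentIn
  have oU : IsOpen U := Metric.isOpen_ball.connectedComponentIn
  have cW : IsConnected W := isConnected_connectedComponentIn_iff.2 hxW
  have cU : IsConnected U := isConnected_connectedComponentIn_iff.2 hxU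
  have hxU' : x ∈ U := mem_connectedComponentIn hxU
  have hUW : closure U ⊆ W := by
    refine cU.isPreconnected.closure.subset_connectedComponentIn (subset_closure hxU') ?_
    refine (closure_mono (connectedComponentIn_subset _ _)).trans ?_
    refine Metric.closure_ball_subset_closedBall.trans ?_
    exact Metric.closedBall_subset_ball (by linarith)
  refine ⟨U, oU, hxU', ANEOn_of_subtype (subset_closure.trans hUW) ?_⟩
  have H : HUni W := HUni_of_small hdim hsm oW (by
    intro a ha b hb
    have h1 := Metric.mem_ball.1 (connectedComponentIn_subset _ _ ha)
    have h2 := Metric.mem_ball.1 (connectedComponentIn_subset _ _ hb)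
    linarith [dist_triangle_right a b x])
  have : LocallyPathConnectedSpace W := oW.locallyPathConnectedSpace
  have : ConnectedSpace W := isConnected_iff_connectedSpace.1 cW
  have im : ∀ S : Set X, S ⊆ W → Subtype.val '' (Subtype.val ⁻¹' S : Set W) = S := by
    intro S hS
    rw [Subtype.image_preimage_coe, inter_eq_right.2 hS]
  refine ANEOn_of_HUni H (oU.preimage continuous_subtype_val) ⟨⟨⟨x, hUW (subset_closure hxU')⟩, hxU'⟩, ?_⟩ ?_
  · rw [← Topology.IsInducing.subtypeVal.isPreconnected_image, im _ (subset_closure.trans hUW)]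
    exact cU.isPreconnected
  · have hc : IsCompact (Subtype.val ⁻¹' closure U : Set W) := by
      rw [Subtype.isCompact_iff, im _ hUW]
      exact isClosed_closure.isCompact
    exact hc.of_isClosed_subset isClosed_closure
      (closure_minimal (preimage_mono subset_closure) (isClosed_closure.preimage continuous_subtype_val))

theorem exists_close_homotopic {X : Type} [MetricSpace X] [CompactSpace X] (h : IsANR X) :
    ∃ δ > 0, ∀ (a b : X) (α β : Path a b), (∀ t, dist (α t) (β t) < δ) → α.Homotopic β := by
  classical
  rcases isEmpty_or_nonempty X with hX | hX
  · exact ⟨1, one_pos, fun a => (hX.false a).elim⟩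
  let j := kuratowskiEmbedding X
  have hj : Isometry j := kuratowskiEmbedding.isometry X
  have hZc : IsCompact (range j) := isCompact_range hj.continuous
  obtain ⟨V, oV, hZV, g, hg⟩ := h _ (range j) hZc.isClosed
    ⟨hj.isometryEquivOnRange.symm, hj.isometryEquivOnRange.symm.continuous⟩
  let r := fun y => if hy : y ∈ V then g ⟨y, hy⟩ else Classical.arbitrary X
  have hr : ContinuousOn r V := by
    rw [continuousOn_iff_continuous_domRestrict]
    convert g.continuous using 1
    funext y
    simp [r]
  have hrj : ∀ x, r (j x) = x := by
    intro x
    have h1 : r (j x) = g ⟨j x, hZV (mem_range_self x)⟩ := by simp [r, hZV (mem_range_self x)]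
    rw [h1, hg _ (mem_range_self x)]
    exact hj.isometryEquivOnRange.symm_apply_apply x
  obtain ⟨δ, hδ, hδV⟩ := hZc.exists_thickening_subset_open oV hZV
  refine ⟨δ, hδ, fun a b α β hab => ?_⟩
  let L : unitInterval × unitInterval → _ := fun p => AffineMap.lineMap (k := ℝ) (j (α p.2)) (j (β p.2)) (p.1 : ℝ)
  have hL : Continuous L := by
    have := hj.continuous
    simp only [L, AffineMap.lineMap_apply_module]
    fun_prop
  have hLV : ∀ p, L p ∈ V := by
    intro p
    apply hδV
    rw [Metric.mem_thickening_iff]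
    refine ⟨j (α p.2), mem_range_self _, ?_⟩
    simp only [L]
    rw [dist_lineMap_left, hj.dist_eq]
    refine lt_of_le_of_lt ?_ (hab p.2)
    rw [Real.norm_of_nonneg p.1.2.1]
    exact mul_le_of_le_one_left dist_nonneg p.1.2.2
  refine ⟨⟨⟨⟨fun p => r (L p), ?_⟩, ?_, ?_⟩, ?_⟩⟩
  · exact hr.comp_continuous hL hLV
  · intro t; simp [L, hrj]
  · intro t; simp [L, hrj]
  · intro s t ht
    rcases ht with rfl | ht
    · simp [L, hrj]
    · have : t = 1 := ht
      subst this
      simp [L, hrj]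

theorem exists_short_paths {X : Type} [MetricSpace X] [CompactSpace X] [LocallyPathConnectedSpace X]
    {δ : ℝ} (hδ : 0 < δ) : ∃ η > 0, ∀ a b : X, dist a b < η →
      ∃ p : Path a b, ∀ s t, dist (p s) (p t) < δ := by
  have hx : ∀ x : X, x ∈ Metric.ball x (δ/2) := fun x => Metric.mem_ball_self (by positivity)
  obtain ⟨η, hη, h⟩ := lebesgue_number_lemma_of_metric (c := fun x => connectedComponentIn (Metric.ball x (δ/2)) x)
    (isCompact_univ (X := X)) (fun x => Metric.isOpen_ball.connectedComponentIn)
    (fun x _ => mem_iUnion.2 ⟨x, mem_connectedComponentIn (hx x)⟩)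
  refine ⟨η, hη, fun a b hab => ?_⟩
  obtain ⟨x, hxa⟩ := h a (mem_univ a)
  have ha := hxa (Metric.mem_ball_self hη)
  have hb := hxa (Metric.mem_ball'.2 hab)
  have hc : IsConnected (connectedComponentIn (Metric.ball x (δ/2)) x) := isConnected_connectedComponentIn_iff.2 (hx x)
  have hp := Metric.isOpen_ball.connectedComponentIn.isConnected_iff_isPathConnected.1 hc
  obtain ⟨p, hp⟩ := hp.joinedIn a ha b hb
  refine ⟨p, fun s t => ?_⟩
  have h1 := Metric.mem_ball.1 (connectedComponentIn_subset _ _ (hp s))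
  have h2 := Metric.mem_ball.1 (connectedComponentIn_subset _ _ (hp t))
  linarith [dist_triangle_right (p s) (p t) x]

/-- class of a path in the fundamental groupoid -/
def pcl {X : Type} [TopologicalSpace X] {a b : X} (γ : Path a b) :
    FundamentalGroupoid.mk a ⟶ FundamentalGroupoid.mk b := Path.Homotopic.Quotient.mk γ

theorem pcl_trans {X : Type} [TopologicalSpace X] {a b c : X} (γ : Path a b) (γ' : Path b c) :
    pcl (γ.trans γ') = CategoryTheory.CategoryStruct.comp (pcl γ) (pcl γ') :=
  Path.Homotopic.Quotient.mk_trans _ _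

theorem pcl_refl {X : Type} [TopologicalSpace X] (a : X) :
    pcl (Path.refl a) = CategoryTheory.CategoryStruct.id _ := rfl

theorem pcl_eq {X : Type} [TopologicalSpace X] {a b : X} {γ γ' : Path a b} (h : γ.Homotopic γ') :
    pcl γ = pcl γ' := Path.Homotopic.Quotient.eq.2 h

open CategoryTheory in
theorem path_induction {X : Type} [MetricSpace X] {ε : ℝ} (hε : 0 < ε)
    {P : ∀ {a b : X}, (FundamentalGroupoid.mk a ⟶ FundamentalGroupoid.mk b) → Prop}
    (h1 : ∀ a : X, P (𝟙 (FundamentalGroupoid.mk a)))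
    (h2 : ∀ {a b c : X} (f : FundamentalGroupoid.mk a ⟶ FundamentalGroupoid.mk b)
      (g : FundamentalGroupoid.mk b ⟶ FundamentalGroupoid.mk c), P f → P g → P (f ≫ g))
    (h3 : ∀ {a b : X} (γ : Path a b), (∀ s t, dist (γ s) (γ t) < ε) → P (pcl γ))
    {a b : X} (γ : Path a b) : P (pcl γ) := by
  have hu := CompactSpace.uniformContinuous_of_continuous γ.continuous
  obtain ⟨δ, hδ, hd⟩ := Metric.uniformContinuous_iff.1 hu ε hε
  obtain ⟨N, hN⟩ := exists_nat_one_div_lt hδ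
  have hNp : (0:ℝ) < N + 1 := by positivity
  let u : ℕ → unitInterval := fun k => projIcc 0 1 zero_le_one ((k : ℝ) / (N + 1))
  have key : ∀ k, P (pcl (γ.subpath 0 (u k))) := by
    intro k
    induction k with
    | zero =>
      have : u 0 = 0 := by simp [u]
      rw [this, Path.subpath_self, pcl_refl]
      exact h1 _
    | succ k ih =>
      rw [← pcl_eq ⟨Path.Homotopy.subpathTransSubpath γ 0 (u k) (u (k+1))⟩, pcl_trans]
      refine h2 _ _ ih (h3 _ fun s t => ?_)
      have hs : ∀ s, γ.subpath (u k) (u (k+1)) s ∈ γ '' (uIcc (u k) (u (k+1))) := by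
        intro s; rw [← Path.range_subpath]; exact mem_range_self s
      obtain ⟨s', hs', e1⟩ := hs s
      obtain ⟨t', ht', e2⟩ := hs t
      rw [← e1, ← e2]
      apply hd
      have h4 : dist (u k) (u (k+1)) ≤ 1 / (N+1) := by
        have := (LipschitzWith.projIcc (zero_le_one (α := ℝ))).dist_le_mul ((k:ℝ)/(N+1)) (((k+1:ℕ):ℝ)/(N+1))
        refine this.trans ?_
        rw [NNReal.coe_one, one_mul, Real.dist_eq, abs_sub_comm, abs_of_nonneg]
        · push_cast; apply le_of_eq; ring
        · rw [sub_nonneg]; gcongr; simp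
      refine lt_of_le_of_lt ?_ (h4.trans_lt hN)
      have h5 : (s' : ℝ) ∈ uIcc (u k : ℝ) (u (k+1)) := hs'
      have h6 : (t' : ℝ) ∈ uIcc (u k : ℝ) (u (k+1)) := ht'
      exact Real.dist_le_of_mem_uIcc h5 h6
  have hN1 : u (N+1) = 1 := by
    have : (((N+1:ℕ):ℝ)/(N+1)) = 1 := by push_cast; exact div_self hNp.ne'
    simp only [u]
    rw [this]; simp
  have hf := key (N+1)
  rw [hN1, Path.subpath_zero_one] at hf
  have gen : ∀ (a' b' : X) (ha : a' = a) (hb : b' = b), P (pcl (γ.cast ha hb)) → P (pcl γ) := by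
    intro a' b' ha hb h
    subst ha; subst hb
    exact h
  exact gen _ _ _ _ hf

open CategoryTheory in
theorem fg_of_anr {X : Type} [MetricSpace X] [CompactSpace X] [ConnectedSpace X]
    [LocallyConnectedSpace X] (h : IsANR X) (x : X) : Group.FG (FundamentalGroup X x) := by
  classical
  have : LocallyPathConnectedSpace X := locallyPathConnected_of_complete
  have : PathConnectedSpace X := pathConnectedSpace_iff_connectedSpace.2 inferInstance
  obtain ⟨δ, hδ, hclose⟩ := exists_close_homotopic h
  obtain ⟨η', hη', hshort⟩ := exists_short_paths (X := X) (show 0 < δ/8 by positivity)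
  obtain ⟨η, hη, hle1, hle2⟩ : ∃ η > 0, η ≤ η' ∧ η ≤ δ/8 := ⟨min η' (δ/8), by positivity, min_le_left _ _, min_le_right _ _⟩
  have hE : ∀ a b : X, ∃ p : Path a b, dist a b < η → ∀ s t, dist (p s) (p t) < δ/8 := by
    intro a b
    by_cases hab : dist a b < η
    · obtain ⟨p, hp⟩ := hshort a b (hab.trans_le hle1)
      exact ⟨p, fun _ => hp⟩
    · exact ⟨PathConnectedSpace.somePath a b, fun h => (hab h).elim⟩
  choose E hE using hE
  obtain ⟨T, -, hTf, hT⟩ := finite_cover_balls_of_compact (isCompact_univ (X := X)) (show 0 < η/3 by positivity)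
  have hn : ∀ a : X, ∃ p ∈ T, dist a p < η/3 := by
    intro a
    obtain ⟨p, hp, hpa⟩ := mem_iUnion₂.1 (hT (mem_univ a))
    exact ⟨p, hp, hpa⟩
  choose n hnT hn using hn
  let c : ∀ a : X, Path x a := fun a => PathConnectedSpace.somePath x a
  let C : ∀ a : X, FundamentalGroupoid.mk x ⟶ FundamentalGroupoid.mk a := fun a => pcl (c (n a)) ≫ pcl (E (n a) a)
  let gen : X × X → FundamentalGroup X x := fun p => (pcl (c p.1) ≫ pcl (E p.1 p.2) ≫ Groupoid.inv (pcl (c p.2)) :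
    FundamentalGroupoid.mk x ⟶ FundamentalGroupoid.mk x)
  have hfin : (insert (C x : FundamentalGroup X x) (gen '' (T ×ˢ T))).Finite := ((hTf.prod hTf).image _).insert _
  set G := Subgroup.closure (insert (C x : FundamentalGroup X x) (gen '' (T ×ˢ T))) with hG
  have key : ∀ {a b : X} (γ : Path a b), (C a ≫ pcl γ ≫ Groupoid.inv (C b) : FundamentalGroup X x) ∈ G := by
    refine fun γ => path_induction (ε := η/3) (by positivity)
      (P := fun {a b} f => (C a ≫ f ≫ Groupoid.inv (C b) : FundamentalGroup X x) ∈ G) ?_ ?_ ?_ γ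
    · intro a
      have : C a ≫ 𝟙 _ ≫ Groupoid.inv (C a) = (1 : FundamentalGroup X x) := by
        rw [Category.id_comp, Groupoid.comp_inv]; rfl
      rw [this]; exact G.one_mem
    · intro a b c f g hf hg
      have : C a ≫ (f ≫ g) ≫ Groupoid.inv (C c) =
          (C a ≫ f ≫ Groupoid.inv (C b)) ≫ (C b ≫ g ≫ Groupoid.inv (C c)) := by simp
      rw [this]; exact G.mul_mem hg hf
    · intro a b γ hγ
      have hab : dist a b < η/3 := by have := hγ 0 1; rwa [γ.source, γ.target] at this
      have hna := hn a
      have hnb := hn b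
      have hnab : dist (n a) (n b) < η := by
        have := dist_triangle4 (n a) a b (n b)
        rw [dist_comm (n a) a] at this
        linarith
      have e : pcl (E (n a) a) ≫ pcl γ = pcl (E (n a) (n b)) ≫ pcl (E (n b) b) := by
        rw [← pcl_trans, ← pcl_trans]
        apply pcl_eq
        apply hclose
        have w1 : ∀ t, dist (E (n a) a t) (n a) < δ/8 := fun t => by
          have := hE (n a) a (by rw [dist_comm]; linarith) t 0
          rwa [Path.source] at this
        have w2 : ∀ t, dist (E (n b) b t) (n b) < δ/8 := fun t => by
          have := hE (n b) b (by rw [dist_comm]; linarith) t 0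
          rwa [Path.source] at this
        have w3 : ∀ t, dist (E (n a) (n b) t) (n a) < δ/8 := fun t => by
          have := hE (n a) (n b) hnab t 0
          rwa [Path.source] at this
        have w4 : ∀ t, dist (γ t) a < η/3 := fun t => by
          have := hγ t 0
          rwa [Path.source] at this
        have l : ∀ t, dist ((E (n a) a).trans γ t) (n a) < δ/2 := by
          intro t
          rw [Path.trans_apply]
          split_ifs with ht
          · exact (w1 _).trans (by linarith)
          · refine (dist_triangle _ a _).trans_lt ?_
            have := w4 ⟨2 * (t:ℝ) - 1, unitInterval.two_mul_sub_one_mem_iff.2 ⟨(not_le.1 ht).le, t.2.2⟩⟩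
            linarith
        have l' : ∀ t, dist ((E (n a) (n b)).trans (E (n b) b) t) (n a) < δ/2 := by
          intro t
          rw [Path.trans_apply]
          split_ifs with ht
          · exact (w3 _).trans (by linarith)
          · refine (dist_triangle _ (n b) _).trans_lt ?_
            have := w2 ⟨2 * (t:ℝ) - 1, unitInterval.two_mul_sub_one_mem_iff.2 ⟨(not_le.1 ht).le, t.2.2⟩⟩
            rw [dist_comm (n b)]
            linarith
        intro t
        linarith [l t, l' t, dist_triangle_right ((E (n a) a).trans γ t) ((E (n a) (n b)).trans (E (n b) b) t) (n a)]
      have : C a ≫ pcl γ ≫ Groupoid.inv (C b) = gen (n a, n b) := by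
        simp only [C, gen, Category.assoc]
        rw [reassoc_of% e]
        simp
      rw [this]
      exact Subgroup.subset_closure (mem_insert_of_mem _ ⟨_, ⟨hnT a, hnT b⟩, rfl⟩)
  obtain ⟨z, hz⟩ : ∃ z : FundamentalGroup X x, z = C x := ⟨_, rfl⟩
  have hCx : z ∈ G := hz ▸ Subgroup.subset_closure (mem_insert _ _)
  refine Group.fg_def.2 ((Subgroup.fg_iff _).2 ⟨_, ?_, hfin⟩)
  rw [eq_top_iff]
  intro g _
  change g ∈ G
  obtain ⟨γ, hγ⟩ := Path.Homotopic.Quotient.mk_surjective (FundamentalGroup.toPath g)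
  have h1 := key γ
  have h2 : pcl γ = g := hγ
  have h3 : (C x ≫ pcl γ ≫ Groupoid.inv (C x) : FundamentalGroup X x) = z⁻¹ * g * z := by
    rw [h2, ← hz]; rfl
  rw [h3] at h1
  have h4 := G.mul_mem (G.mul_mem hCx h1) (G.inv_mem hCx)
  have h5 : z * (z⁻¹ * g * z) * z⁻¹ = g := by group
  rwa [h5] at h4

/-- A one-dimensional Peano continuum is an ANR iff its fundamental group is finitely
generated. -/
theorem stmt_12 {X : Type} [MetricSpace X] [CompactSpace X] [ConnectedSpace X]
    [LocallyConnectedSpace X] (hdim : CovDimLE X 1) :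
    IsANR X ↔ ∀ x : X, Group.FG (FundamentalGroup X x) :=
  ⟨fun h x => fg_of_anr h x, fun h => anr_of_fg hdim h⟩
end

section
/- Let X be a one-dimensional Peano continuum. Then X is an absolute retract if and only if X is simply connected. -/
open Set

/-- Absolute retract. -/
def IsAR (X : Type*) [MetricSpace X] : Prop :=
  ∀ (Y : Type) [MetricSpace Y] (Z : Set Y), IsClosed Z →
    ∀ f : C(Z, X), ∃ g : C(Y, X), ∀ z : Z, g z = f z

theorem aux_chain {X : Type*} [MetricSpace X] {C : Set X} (hC : IsPreconnected C) {δ : ℝ}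
    (hδ : 0 < δ) {x y : X} (hx : x ∈ C) (hy : y ∈ C) :
    ∃ (n : ℕ) (p : ℕ → X), p 0 = x ∧ (∀ j, n ≤ j → p j = y) ∧ (∀ j, p j ∈ C) ∧
      ∀ j, dist (p j) (p (j + 1)) < δ := by
  have key : Relation.ReflTransGen (fun a b => a ∈ C ∧ b ∈ C ∧ dist a b < δ) x y := by
    refine hC.induction₂ (fun a b => Relation.ReflTransGen
      (fun a b => a ∈ C ∧ b ∈ C ∧ dist a b < δ) a b) ?_ ?_ ?_ hx hy
    · intro a ha
      filter_upwards [self_mem_nhdsWithin, mem_nhdsWithin_of_mem_nhds (Metric.ball_mem_nhds a hδ)]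
        with b hb hb'
      exact Relation.ReflTransGen.single ⟨ha, hb, by rwa [dist_comm]⟩
    · intro a b c _ _ _ h1 h2
      exact h1.trans h2
    · intro a b _ _ h
      refine Relation.ReflTransGen.head_induction_on h Relation.ReflTransGen.refl ?_
      intro a c h1 _ h3
      exact h3.tail ⟨h1.2.1, h1.1, by rw [dist_comm]; exact h1.2.2⟩
  induction key using Relation.ReflTransGen.head_induction_on with
  | refl => exact ⟨0, fun _ => y, rfl, fun _ _ => rfl, fun _ => hy, fun _ => by simpa using hδ⟩
  | @head a b h _ ih =>
    obtain ⟨n, p, h0, h1, h2, h3⟩ := ih h.2.1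
    refine ⟨n + 1, fun j => Nat.casesOn j a p, rfl, ?_, ?_, ?_⟩
    · rintro (_ | j) hj
      · omega
      · exact h1 j (by omega)
    · rintro (_ | j)
      · exact hx
      · exact h2 j
    · rintro (_ | j)
      · simpa [h0] using h.2.2
      · exact h3 j

theorem aux_ulc (X : Type*) [MetricSpace X] [CompactSpace X] [LocallyConnectedSpace X]
    {ε : ℝ} (hε : 0 < ε) : ∃ δ > 0, ∀ x y : X, dist x y < δ →
      ∃ C : Set X, IsPreconnected C ∧ x ∈ C ∧ y ∈ C ∧ C ⊆ Metric.ball x ε := by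
  obtain ⟨δ, hδ, h⟩ := lebesgue_number_lemma_of_metric (isCompact_univ (X := X))
    (c := fun z : X => connectedComponentIn (Metric.ball z (ε / 2)) z)
    (fun z => Metric.isOpen_ball.connectedComponentIn)
    (fun z _ => mem_iUnion.2 ⟨z, mem_connectedComponentIn (Metric.mem_ball_self (by positivity))⟩)
  refine ⟨δ, hδ, fun x y hxy => ?_⟩
  obtain ⟨z, hz⟩ := h x (mem_univ _)
  have hx := hz (Metric.mem_ball_self hδ)
  refine ⟨_, isPreconnected_connectedComponentIn, hx,
    hz (by rwa [Metric.mem_ball, dist_comm]), ?_⟩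
  intro w hw
  have h1 := connectedComponentIn_subset _ _ hw
  have h2 := connectedComponentIn_subset _ _ hx
  rw [Metric.mem_ball] at *
  have := dist_triangle_right w x z
  linarith

def AuxInv {X : Type*} [MetricSpace X] (x y : X) (δ : ℕ → ℝ) (k : ℕ) (s : ℕ × (ℕ → X)) : Prop :=
  0 < s.1 ∧ s.2 0 = x ∧ (∀ j, s.1 ≤ j → s.2 j = y) ∧ ∀ j, dist (s.2 j) (s.2 (j + 1)) < δ k

theorem aux_refine {X : Type*} [MetricSpace X] {x y : X} {δ e : ℕ → ℝ} (hδ : ∀ k, 0 < δ k)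
    (he : ∀ k, 0 < e k)
    (H : ∀ k, ∀ x y : X, dist x y < δ k →
      ∃ C : Set X, IsPreconnected C ∧ x ∈ C ∧ y ∈ C ∧ C ⊆ Metric.ball x (e k))
    (k : ℕ) (s : ℕ × (ℕ → X)) (hs : AuxInv x y δ k s) :
    ∃ s' : ℕ × (ℕ → X), AuxInv x y δ (k + 1) s' ∧ ∃ N, 0 < N ∧ s'.1 = s.1 * N ∧
      ∀ i, dist (s.2 (i / N)) (s'.2 i) < e k := by
  obtain ⟨M, p⟩ := s
  obtain ⟨hM, h0, h1, h2⟩ := hs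
  simp only at hM h0 h1 h2
  have : ∀ j, ∃ (n : ℕ) (c : ℕ → X), c 0 = p j ∧ (∀ i, n ≤ i → c i = p (j + 1)) ∧
      (∀ i, dist (p j) (c i) < e k) ∧ (∀ i, dist (c i) (c (i + 1)) < δ (k + 1)) ∧
      (M ≤ j → n = 0) := by
    intro j
    by_cases hj : M ≤ j
    · refine ⟨0, fun _ => p j, rfl, fun i _ => ?_, by simp [he], by simp [hδ], fun _ => rfl⟩
      rw [h1 j hj, h1 (j + 1) (by omega)]
    · obtain ⟨C, hC, hx, hy, hCb⟩ := H k _ _ (h2 j)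
      obtain ⟨n, c, c0, c1, c2, c3⟩ := aux_chain hC (hδ (k + 1)) hx hy
      refine ⟨n, c, c0, c1, fun i => ?_, c3, fun h => absurd h hj⟩
      have := hCb (c2 i)
      rwa [Metric.mem_ball, dist_comm] at this
  choose n c c0 c1 c2 c3 c4 using this
  let N := (Finset.range M).sup n + 1
  have hN : 0 < N := Nat.succ_pos _
  have hnN : ∀ j, n j ≤ N := by
    intro j
    by_cases hj : M ≤ j
    · rw [c4 j hj]; omega
    · have := Finset.le_sup (f := n) (Finset.mem_range.2 (not_le.1 hj))
      omega
  refine ⟨(M * N, fun i => c (i / N) (i % N)), ⟨by positivity, ?_, ?_, ?_⟩, N, hN, rfl, ?_⟩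
  · simp [c0, h0]
  · intro i hi
    have hi' : M ≤ i / N := (Nat.le_div_iff_mul_le hN).2 hi
    change c (i / N) (i % N) = y
    rw [c1 _ _ (by rw [c4 _ hi']; omega), h1 _ (by omega)]
  · intro i
    change dist (c (i / N) (i % N)) (c ((i + 1) / N) ((i + 1) % N)) < _
    by_cases hlt : i % N + 1 < N
    · have e1 : (i + 1) / N = i / N := by
        rw [Nat.succ_div]
        rw [if_neg]; · rfl
        intro hd
        have h1 := Nat.mod_lt i hN
        have h2 : (i + 1) % N = 0 := Nat.mod_eq_zero_of_dvd hd
        rw [Nat.add_mod, Nat.mod_eq_of_lt (show 1 < N by omega), Nat.mod_eq_of_lt hlt] at h2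
        omega
      have e2 : (i + 1) % N = i % N + 1 := by
        have a := Nat.div_add_mod i N
        have b := Nat.div_add_mod (i + 1) N
        rw [e1] at b; omega
      rw [e1, e2]
      exact c3 _ _
    · have h3 : i % N + 1 = N := by have := Nat.mod_lt i hN; omega
      have a := Nat.div_add_mod i N
      have e0 : i + 1 = N * (i / N + 1) := by rw [mul_add]; omega
      have e1 : (i + 1) / N = i / N + 1 := by rw [e0, Nat.mul_div_cancel_left _ hN]
      have e2 : (i + 1) % N = 0 := by rw [e0, Nat.mul_mod_right]
      rw [e1, e2, c0, ← c1 (i / N) N (hnN _)]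
      have h4 := c3 (i / N) (i % N)
      rwa [h3] at h4
  · intro i
    exact c2 _ _

theorem aux_joined {X : Type*} [MetricSpace X] [CompactSpace X] [LocallyConnectedSpace X]
    {ε : ℝ} (hε : 0 < ε) : ∃ δ > 0, ∀ x y : X, dist x y < δ →
      JoinedIn (Metric.ball x (3 * ε)) x y := by
  have : ∀ k : ℕ, ∃ δ > 0, δ ≤ ε / 2 ^ k ∧ ∀ x y : X, dist x y < δ →
      ∃ C : Set X, IsPreconnected C ∧ x ∈ C ∧ y ∈ C ∧ C ⊆ Metric.ball x (ε / 2 / 2 ^ k) := by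
    intro k
    obtain ⟨δ, hδ, h⟩ := aux_ulc X (ε := ε / 2 / 2 ^ k) (by positivity)
    exact ⟨min δ (ε / 2 ^ k), lt_min hδ (by positivity), min_le_right _ _,
      fun x y hxy => h x y (hxy.trans_le (min_le_left _ _))⟩
  choose δ hδ hδε H using this
  refine ⟨δ 0, hδ 0, fun x y hxy => ?_⟩
  let St (k : ℕ) := {s : ℕ × (ℕ → X) // AuxInv x y δ k s}
  have step : ∀ k (s : St k), ∃ s' : St (k + 1), ∃ N, 0 < N ∧ s'.1.1 = s.1.1 * N ∧
      ∀ i, dist (s.1.2 (i / N)) (s'.1.2 i) < ε / 2 / 2 ^ k := by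
    intro k s
    obtain ⟨s', h, h'⟩ := aux_refine (e := fun k => ε / 2 / 2 ^ k) hδ
      (fun k => by positivity) H k s.1 s.2
    exact ⟨⟨s', h⟩, h'⟩
  choose nxt hnxt using step
  let s0 : St 0 := ⟨(1, fun j => if j = 0 then x else y), by
    refine ⟨one_pos, by simp, fun j hj => ?_, fun j => ?_⟩
    · simp only at hj
      simp; omega
    · by_cases hj : j = 0
      · simpa [hj] using hxy
      · simpa [hj] using hδ 0⟩
  let s : ∀ k, St k := fun k => Nat.rec s0 (fun k t => nxt k t) k
  have hs : ∀ k, s (k + 1) = nxt k (s k) := fun k => rfl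
  let h : ℕ → ℝ → X := fun k t => (s k).1.2 ⌊((s k).1.1 : ℝ) * t⌋₊
  have hd : ∀ t k, dist (h k t) (h (k + 1) t) ≤ ε / 2 / 2 ^ k := by
    intro t k
    obtain ⟨N, hN, hM, hdist⟩ := hnxt k (s k)
    rw [← hs] at hM hdist
    have := hdist ⌊((s (k + 1)).1.1 : ℝ) * t⌋₊
    rw [← Nat.floor_div_natCast, hM] at this
    have e : ((((s k).1.1 * N : ℕ) : ℝ) * t / (N : ℝ)) = ((s k).1.1 : ℝ) * t := by
      have : (N : ℝ) ≠ 0 := by positivity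
      push_cast; field_simp
    rw [e, ← hM] at this
    exact this.le
  have hlim : ∀ t, ∃ a, Filter.Tendsto (fun k => h k t) Filter.atTop (nhds a) := fun t =>
    cauchySeq_tendsto_of_complete (cauchySeq_of_le_geometric_two (hd t))
  choose g hg using hlim
  have hgd : ∀ t k, dist (h k t) (g t) ≤ ε / 2 ^ k := fun t k =>
    dist_le_of_le_geometric_two_of_tendsto (hd t) (hg t) k
  have hfl : ∀ k a b, a ≤ b → b < a + 1 / ((s k).1.1 : ℝ) → dist (h k a) (h k b) < δ k := by
    intro k a b hab hb
    obtain ⟨hM, -, -, hst⟩ := (s k).2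
    have hM' : (0 : ℝ) < ((s k).1.1 : ℝ) := by exact_mod_cast hM
    have h1 : ⌊((s k).1.1 : ℝ) * a⌋₊ ≤ ⌊((s k).1.1 : ℝ) * b⌋₊ := by gcongr
    have h2 : ⌊((s k).1.1 : ℝ) * b⌋₊ ≤ ⌊((s k).1.1 : ℝ) * a⌋₊ + 1 := by
      by_cases ha : 0 ≤ a
      · rw [← Nat.floor_add_one (by positivity)]
        apply Nat.floor_mono
        calc ((s k).1.1 : ℝ) * b ≤ ((s k).1.1 : ℝ) * (a + 1 / ((s k).1.1 : ℝ)) := by gcongr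
          _ = _ := by field_simp
      · have : ((s k).1.1 : ℝ) * b < 1 := by
          calc ((s k).1.1 : ℝ) * b < ((s k).1.1 : ℝ) * (0 + 1 / ((s k).1.1 : ℝ)) := by
                apply mul_lt_mul_of_pos_left _ hM'
                linarith
            _ = _ := by field_simp; simp
        rw [Nat.floor_eq_zero.2 this]; omega
    have h3 : ⌊((s k).1.1 : ℝ) * b⌋₊ = ⌊((s k).1.1 : ℝ) * a⌋₊ ∨
      ⌊((s k).1.1 : ℝ) * b⌋₊ = ⌊((s k).1.1 : ℝ) * a⌋₊ + 1 := by omega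
    change dist ((s k).1.2 _) ((s k).1.2 _) < _
    rcases h3 with h3 | h3 <;> rw [h3]
    · simpa using hδ k
    · exact hst _
  have hcont : Continuous g := by
    rw [Metric.continuous_iff]
    intro t η hη
    obtain ⟨k, hk⟩ := exists_pow_lt_of_lt_one (show 0 < η / (3 * ε) by positivity)
      (show (1 / 2 : ℝ) < 1 by norm_num)
    have hk' : 3 * (ε / 2 ^ k) < η := by
      rw [lt_div_iff₀ (by positivity)] at hk
      calc 3 * (ε / 2 ^ k) = (1 / 2) ^ k * (3 * ε) := by rw [one_div, inv_pow]; ring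
        _ < η := hk
    have hM' : (0 : ℝ) < ((s k).1.1 : ℝ) := by exact_mod_cast (s k).2.1
    refine ⟨1 / ((s k).1.1 : ℝ), by positivity, fun a ha => ?_⟩
    have : dist (h k a) (h k t) < δ k := by
      rw [Real.dist_eq, abs_lt] at ha
      rcases le_total a t with hat | hat
      · exact hfl k a t hat (by linarith)
      · rw [dist_comm]; exact hfl k t a hat (by linarith)
    have h1 := hgd a k
    have h2 := hgd t k
    have h3 := dist_triangle4 (g a) (h k a) (h k t) (g t)
    rw [dist_comm (g a) (h k a)] at h3
    have := hδε k
    linarith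
  have hg0 : g 0 = x := by
    refine tendsto_nhds_unique (hg 0) ?_
    have : (fun k => h k 0) = fun _ => x := by
      funext k
      simp only [h, mul_zero, Nat.floor_zero]
      exact (s k).2.2.1
    rw [this]; exact tendsto_const_nhds
  have hg1 : g 1 = y := by
    refine tendsto_nhds_unique (hg 1) ?_
    have : (fun k => h k 1) = fun _ => y := by
      funext k
      simp only [h, mul_one, Nat.floor_natCast]
      exact (s k).2.2.2.1 _ le_rfl
    rw [this]; exact tendsto_const_nhds
  refine JoinedIn.ofLine hcont.continuousOn hg0 hg1 ?_
  rintro _ ⟨t, -, rfl⟩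
  have h1 := hgd t 0
  have h2 : dist (h 0 t) x ≤ δ 0 := by
    change dist (if _ = 0 then x else y) x ≤ _
    split_ifs
    · simpa using (hδ 0).le
    · rw [dist_comm]; exact hxy.le
  have h3 := hδε 0
  rw [Metric.mem_ball]
  have := dist_triangle_left (g t) x (h 0 t)
  simp only [pow_zero, div_one] at *
  linarith

theorem aux_lpc (X : Type*) [MetricSpace X] [CompactSpace X] [LocallyConnectedSpace X] :
    LocallyPathConnectedSpace X := by
  rw [locallyPathConnectedSpace_iff_pathComponentIn_mem_nhds]
  intro x u hu hx
  obtain ⟨ε, hε, h⟩ := Metric.isOpen_iff.1 hu x hx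
  obtain ⟨δ, hδ, H⟩ := aux_joined (X := X) (ε := ε / 3) (by positivity)
  filter_upwards [Metric.ball_mem_nhds x hδ] with y hy
  rw [Metric.mem_ball, dist_comm] at hy
  exact (H x y hy).mono (by rwa [mul_div_cancel₀ _ (by norm_num)])
theorem aux_bump {X : Type*} [MetricSpace X] {v : Set X} (hv : IsOpen v) :
    ∃ f : X → ℝ, Continuous f ∧ (∀ x, 0 ≤ f x) ∧ ∀ x, 0 < f x ↔ x ∈ v := by
  by_cases h : (vᶜ).Nonempty
  · refine ⟨fun x => Metric.infDist x vᶜ, Metric.continuous_infDist_pt _,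
      fun x => Metric.infDist_nonneg, fun x => ?_⟩
    rw [← hv.isClosed_compl.notMem_iff_infDist_pos h]
    simp
  · refine ⟨fun _ => 1, continuous_const, fun _ => zero_le_one, fun x => ?_⟩
    rw [not_nonempty_iff_eq_empty, compl_empty_iff] at h
    simp [h]

theorem aux_dim {X : Type*} [MetricSpace X] (hdim : CovDimLE X 1) (U : Fin 3 → Set X)
    (hU : ∀ i, IsOpen (U i)) (hc : ∀ x, ∃ i, x ∈ U i) :
    ∃ ψ : Fin 3 → X → ℝ, (∀ i, Continuous (ψ i)) ∧ (∀ i x, 0 ≤ ψ i x) ∧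
      (∀ i x, x ∉ U i → ψ i x = 0) ∧ (∀ x, ∃ i, 0 < ψ i x) ∧ ∀ x, ∃ i, ψ i x = 0 := by
  classical
  obtain ⟨V, hVf, hVo, hVc, hVr, hVn⟩ := hdim (range U) (finite_range U)
    (by rintro _ ⟨i, rfl⟩; exact hU i)
    (by
      rw [eq_univ_iff_forall]
      intro x
      obtain ⟨i, hi⟩ := hc x
      exact ⟨U i, ⟨i, rfl⟩, hi⟩)
  have : ∀ v, ∃ i : Fin 3, v ∈ V → v ⊆ U i := by
    intro v
    by_cases hv : v ∈ V
    · obtain ⟨_, ⟨i, rfl⟩, hi⟩ := hVr v hv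
      exact ⟨i, fun _ => hi⟩
    · exact ⟨0, fun h => absurd h hv⟩
  choose c hcU using this
  have : ∀ v, ∃ f : X → ℝ, v ∈ V → Continuous f ∧ (∀ x, 0 ≤ f x) ∧ ∀ x, 0 < f x ↔ x ∈ v := by
    intro v
    by_cases hv : v ∈ V
    · obtain ⟨f, hf⟩ := aux_bump (hVo v hv)
      exact ⟨f, fun _ => hf⟩
    · exact ⟨0, fun h => absurd h hv⟩
  choose ρ hρ using this
  let S : Fin 3 → Finset (Set X) := fun i => hVf.toFinset.filter (fun v => c v = i)
  have hS : ∀ i v, v ∈ S i ↔ v ∈ V ∧ c v = i := by simp [S]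
  have hpos : ∀ i x, ∑ v ∈ S i, ρ v x ≠ 0 → ∃ v ∈ V, c v = i ∧ x ∈ v := by
    intro i x h
    obtain ⟨v, hv, hv'⟩ := Finset.exists_ne_zero_of_sum_ne_zero h
    rw [hS] at hv
    refine ⟨v, hv.1, hv.2, ((hρ v hv.1).2.2 x).1 (lt_of_le_of_ne ((hρ v hv.1).2.1 x) hv'.symm)⟩
  refine ⟨fun i x => ∑ v ∈ S i, ρ v x, ?_, ?_, ?_, ?_, ?_⟩
  · intro i
    refine continuous_finsetSum _ fun v hv => (hρ v ((hS i v).1 hv).1).1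
  · intro i x
    exact Finset.sum_nonneg fun v hv => (hρ v ((hS i v).1 hv).1).2.1 x
  · intro i x hx
    by_contra h
    obtain ⟨v, hv, rfl, hxv⟩ := hpos i x h
    exact hx (hcU v hv hxv)
  · intro x
    obtain ⟨v, hv, hxv⟩ : x ∈ ⋃₀ V := hVc ▸ mem_univ x
    refine ⟨c v, Finset.sum_pos' (fun w hw => (hρ w ((hS _ w).1 hw).1).2.1 x)
      ⟨v, (hS _ _).2 ⟨hv, rfl⟩, ((hρ v hv).2.2 x).2 hxv⟩⟩
  · intro x
    by_contra! h
    choose w hwV hwc hxw using fun i => hpos i x (h i)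
    have hinj : Function.Injective w := fun i j hij => by rw [← hwc i, ← hwc j, hij]
    have h1 : range w ⊆ {v ∈ V | x ∈ v} := by
      rintro _ ⟨i, rfl⟩
      exact ⟨hwV i, hxw i⟩
    have h2 := ncard_le_ncard h1 (hVf.subset (sep_subset _ _))
    rw [← image_univ, ncard_image_of_injective _ hinj, ncard_univ, Nat.card_eq_fintype_card,
      Fintype.card_fin] at h2
    have := hVn x
    omega

theorem aux_log_const {X : Type*} [TopologicalSpace X] {A : Set X} (hA : IsPreconnected A)
    {L G : X → ℂ} {c : ℂ} (hc : c ≠ 0) (hL : Continuous L) (hG : Continuous G)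
    (hLG : ∀ x, Complex.exp (L x) = G x) (hs : ∀ x ∈ A, G x * c ∈ Complex.slitPlane)
    {p q : X} (hp : p ∈ A) (hq : q ∈ A) :
    (L q).im - (L p).im = (G q * c).arg - (G p * c).arg := by
  have hcont : ContinuousOn (fun x => (Complex.log c + L x - Complex.log (G x * c)) /
      (2 * Real.pi * Complex.I)) A := by
    refine ContinuousOn.div_const ?_ _
    refine (continuous_const.add hL).continuousOn.sub ?_
    exact ContinuousOn.clog (by fun_prop) hs
  have hint : ∀ x ∈ A, ∃ n : ℤ, (Complex.log c + L x - Complex.log (G x * c)) /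
      (2 * Real.pi * Complex.I) = n := by
    intro x hx
    have h0 : G x * c ≠ 0 := Complex.slitPlane_ne_zero (hs x hx)
    have : Complex.exp (Complex.log c + L x - Complex.log (G x * c)) = 1 := by
      rw [Complex.exp_sub, Complex.exp_add, Complex.exp_log hc, Complex.exp_log h0, hLG, mul_comm,
        div_self h0]
    obtain ⟨n, hn⟩ := Complex.exp_eq_one_iff.1 this
    refine ⟨n, ?_⟩
    rw [hn, mul_div_assoc, div_self Complex.two_pi_I_ne_zero, mul_one]
  have hdisc : IsDiscrete (range ((↑) : ℤ → ℂ)) := by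
    have h := (Complex.isometry_ofReal.isEmbedding.comp
      Int.isClosedEmbedding_coe_real.isEmbedding).isInducing.isDiscrete_range
    simpa [Function.comp_def] using h
  have heq := hA.constant_of_mapsTo hdisc hcont (fun x hx => by
    obtain ⟨n, hn⟩ := hint x hx
    exact ⟨n, hn.symm⟩) hp hq
  rw [div_left_inj' Complex.two_pi_I_ne_zero] at heq
  have := congrArg Complex.im heq
  simp only [Complex.sub_im, Complex.add_im, Complex.log_im] at this
  linarith

theorem aux_unicoherent {X : Type*} [MetricSpace X] [CompactSpace X] [LocallyConnectedSpace X]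
    [SimplyConnectedSpace X] (hdim : CovDimLE X 1) {A B : Set X} (hA : IsPreconnected A)
    (hB : IsPreconnected B) (hAc : IsClosed A) (hBc : IsClosed B) : IsPreconnected (A ∩ B) := by
  have := aux_lpc X
  rw [isPreconnected_closed_iff]
  intro t t' ht ht' hsub hP hQ
  by_contra hne
  rw [not_nonempty_iff_eq_empty] at hne
  obtain ⟨p, ⟨hpA, hpB⟩, hpt⟩ := hP
  obtain ⟨q, ⟨hqA, hqB⟩, hqt⟩ := hQ
  obtain ⟨O, O', hO, hO', hPO, hQO, hd⟩ := normal_separation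
    ((hAc.inter hBc).inter ht) ((hAc.inter hBc).inter ht') (by
      rw [disjoint_iff_inter_eq_empty, ← inter_inter_distrib_left]; exact hne)
  have hcov : ∀ x ∈ A, x ∈ B → x ∈ O ∨ x ∈ O' := fun x h1 h2 =>
    (hsub ⟨h1, h2⟩).imp (fun h => hPO ⟨⟨h1, h2⟩, h⟩) (fun h => hQO ⟨⟨h1, h2⟩, h⟩)
  have hpO : p ∈ O := hPO ⟨⟨hpA, hpB⟩, hpt⟩
  have hqO : q ∈ O' := hQO ⟨⟨hqA, hqB⟩, hqt⟩
  have hd' : ∀ x, x ∈ O → x ∉ O' := fun x h1 h2 => disjoint_left.1 hd h1 h2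
  obtain ⟨ψ, hψc, hψ0, hψU, hψp, hψz⟩ := aux_dim hdim ![(B \ O)ᶜ, (B \ O')ᶜ, Aᶜ]
    (by
      intro i
      fin_cases i
      · exact (hBc.sdiff hO).isOpen_compl
      · exact (hBc.sdiff hO').isOpen_compl
      · exact hAc.isOpen_compl)
    (by
      intro x
      by_contra! h
      have h0 := h 0
      have h1 := h 1
      have h2 := h 2
      simp at h0 h1 h2
      rcases hcov x h2 h0.1 with h | h
      · exact h0.2 h
      · exact h1.2 h)
  let a := ψ 0
  let b := ψ 1
  let c := ψ 2
  have ha0 : ∀ x, 0 ≤ a x := hψ0 0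
  have hb0 : ∀ x, 0 ≤ b x := hψ0 1
  have hc0 : ∀ x, 0 ≤ c x := hψ0 2
  have ha : ∀ x, x ∈ B → x ∉ O → a x = 0 := fun x h1 h2 => hψU 0 x (by simp [h1, h2])
  have hb : ∀ x, x ∈ B → x ∉ O' → b x = 0 := fun x h1 h2 => hψU 1 x (by simp [h1, h2])
  have hc : ∀ x, x ∈ A → c x = 0 := fun x h1 => hψU 2 x (by simp [h1])
  have hpos : ∀ x, 0 < a x ∨ 0 < b x ∨ 0 < c x := by
    intro x
    obtain ⟨i, hi⟩ := hψp x
    fin_cases i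
    · exact Or.inl hi
    · exact Or.inr (Or.inl hi)
    · exact Or.inr (Or.inr hi)
  have hz : ∀ x, a x = 0 ∨ b x = 0 ∨ c x = 0 := by
    intro x
    obtain ⟨i, hi⟩ := hψz x
    fin_cases i
    · exact Or.inl hi
    · exact Or.inr (Or.inl hi)
    · exact Or.inr (Or.inr hi)
  let G : X → ℂ := fun x => ((a x - c x : ℝ) : ℂ) + ((b x - c x : ℝ) : ℂ) * Complex.I
  have hGre : ∀ x, (G x).re = a x - c x := fun x => by simp [G]
  have hGim : ∀ x, (G x).im = b x - c x := fun x => by simp [G]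
  have hac : Continuous a := hψc 0
  have hbc : Continuous b := hψc 1
  have hcc : Continuous c := hψc 2
  have hGc : Continuous G := by fun_prop
  have hG0 : ∀ x, G x ≠ 0 := by
    intro x h
    have h1 := hGre x
    have h2 := hGim x
    rw [h] at h1 h2
    simp at h1 h2
    rcases hz x with h | h | h <;> rcases hpos x with h' | h' | h' <;> linarith
  obtain ⟨L, ⟨-, hL⟩, -⟩ := Complex.isCoveringMapOn_exp.existsUnique_continuousMap_lifts
    (⟨G, hGc⟩ : C(X, ℂ)) (a₀ := p) (Complex.exp_log (hG0 p)) (fun x => hG0 x)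
  have hLG : ∀ x, Complex.exp (L x) = G x := fun x => congrFun hL x
  have e1 := aux_log_const hA one_ne_zero L.continuous hGc hLG (by
    intro x hx
    rw [mul_one, Complex.mem_slitPlane_iff, hGre, hGim, hc x hx]
    by_contra! h
    have := ha0 x
    rcases hpos x with h' | h' | h' 
    · linarith
    · linarith
    · linarith [hc x hx]) hpA hqA
  have hcre : ∀ x, (G x * ⟨-1, 1⟩).re = 2 * c x - a x - b x := fun x => by
    rw [Complex.mul_re, hGre, hGim]; ring
  have hcim : ∀ x, (G x * ⟨-1, 1⟩).im = a x - b x := fun x => by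
    rw [Complex.mul_im, hGre, hGim]; ring
  have e2 := aux_log_const (c := ⟨-1, 1⟩) hB (by
      intro h; simpa using congrArg Complex.re h) L.continuous hGc hLG (by
    intro x hx
    rw [Complex.mem_slitPlane_iff, hcre, hcim]
    by_contra! h
    have h1 : a x = 0 ∨ b x = 0 := by
      by_cases hxO : x ∈ O
      · exact Or.inr (hb x hx (hd' x hxO))
      · exact Or.inl (ha x hx hxO)
    rcases h1 with h1 | h1 <;> rcases hpos x with h' | h' | h' <;> linarith) hpB hqB
  rw [e1] at e2
  have hpb := hb p hpB (hd' p hpO)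
  have hpc := hc p hpA
  have hqa := ha q hqB (fun h => hd' q h hqO)
  have hqc := hc q hqA
  have hqb : 0 < b q := by
    rcases hpos q with h' | h' | h' <;> linarith
  have f1 : 0 ≤ (G q * 1).arg := by
    rw [Complex.arg_nonneg_iff, mul_one, hGim]; linarith
  have f2 : (G p * 1).arg = 0 := by
    rw [Complex.arg_eq_zero_iff, mul_one, hGim, hGre]
    exact ⟨by linarith [ha0 p], by linarith⟩
  have f3 : (G q * ⟨-1, 1⟩).arg < 0 := by
    rw [Complex.arg_neg_iff, hcim]; linarith
  have f4 : 0 ≤ (G p * ⟨-1, 1⟩).arg := by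
    rw [Complex.arg_nonneg_iff, hcim]; linarith [ha0 p]
  linarith
/-- Hereditary unicoherence. -/
def AuxHU (X : Type*) [TopologicalSpace X] : Prop :=
  ∀ A B : Set X, IsClosed A → IsPreconnected A → IsClosed B → IsPreconnected B →
    IsPreconnected (A ∩ B)

theorem aux_helly3 {X : Type*} [TopologicalSpace X] (hX : AuxHU X) {A B C : Set X}
    (hAc : IsClosed A) (hA : IsPreconnected A) (hBc : IsClosed B) (hB : IsPreconnected B)
    (hCc : IsClosed C) (hC : IsPreconnected C) (hAB : (A ∩ B).Nonempty) (hAC : (A ∩ C).Nonempty)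
    (hBC : (B ∩ C).Nonempty) : (A ∩ B ∩ C).Nonempty := by
  have h1 : IsPreconnected (A ∪ B) := IsPreconnected.union' hAB hA hB
  have h2 := hX _ _ (hAc.union hBc) h1 hCc hC
  rw [isPreconnected_closed_iff] at h2
  obtain ⟨x, h, h'⟩ := h2 A B hAc hBc inter_subset_left
    (by obtain ⟨x, hx, hx'⟩ := hAC; exact ⟨x, ⟨Or.inl hx, hx'⟩, hx⟩)
    (by obtain ⟨x, hx, hx'⟩ := hBC; exact ⟨x, ⟨Or.inr hx, hx'⟩, hx⟩)
  exact ⟨x, h', h.2⟩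

theorem aux_helly_fin {X : Type*} [TopologicalSpace X] (hX : AuxHU X) {ι : Type*} (F : ι → Set X)
    (hFc : ∀ i, IsClosed (F i)) (hF : ∀ i, IsPreconnected (F i))
    (hFF : ∀ i j, (F i ∩ F j).Nonempty) (s : Finset ι) :
    ∀ K : Set X, IsClosed K → IsPreconnected K → K.Nonempty → (∀ i, (K ∩ F i).Nonempty) →
      (K ∩ ⋂ i ∈ s, F i).Nonempty := by
  classical
  induction s using Finset.induction_on with
  | empty => intro K _ _ h _; simpa using h
  | insert a s _ ih =>
    intro K hKc hK _ hKF
    have := ih (K ∩ F a) (hKc.inter (hFc a)) (hX _ _ hKc hK (hFc a) (hF a)) (hKF a)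
      (fun i => aux_helly3 hX hKc hK (hFc a) (hF a) (hFc i) (hF i) (hKF a) (hKF i) (hFF a i))
    rw [Finset.set_biInter_insert, ← inter_assoc]
    exact this

theorem aux_helly {X : Type*} [TopologicalSpace X] [CompactSpace X] [ConnectedSpace X]
    (hX : AuxHU X) {ι : Type*} (F : ι → Set X)
    (hFc : ∀ i, IsClosed (F i)) (hF : ∀ i, IsPreconnected (F i))
    (hFF : ∀ i j, (F i ∩ F j).Nonempty) : ∃ x, ∀ i, x ∈ F i := by
  obtain ⟨x, -, hx⟩ := isCompact_univ.inter_iInter_nonempty F hFc (fun u =>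
    aux_helly_fin hX F hFc hF hFF u univ isClosed_univ isPreconnected_univ univ_nonempty
      (fun i => by simpa using hFF i i))
  exact ⟨x, mem_iInter.1 hx⟩

/-- The smallest subcontinuum containing two points. -/
def AuxHull {X : Type*} [TopologicalSpace X] (x y : X) : Set X :=
  {z | ∀ S : Set X, IsClosed S → IsPreconnected S → x ∈ S → y ∈ S → z ∈ S}

theorem aux_hull_left {X : Type*} [TopologicalSpace X] (x y : X) : x ∈ AuxHull x y :=
  fun _ _ _ h _ => h

theorem aux_hull_right {X : Type*} [TopologicalSpace X] (x y : X) : y ∈ AuxHull x y :=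
  fun _ _ _ _ h => h

theorem aux_hull_preconnected {X : Type*} [MetricSpace X] [CompactSpace X] [ConnectedSpace X]
    (hX : AuxHU X) (x y : X) : IsPreconnected (AuxHull x y) := by
  classical
  let I := {S : Set X // IsClosed S ∧ IsPreconnected S ∧ x ∈ S ∧ y ∈ S}
  have hH : AuxHull x y = ⋂ i : I, i.1 := by
    ext z
    simp only [mem_iInter]
    exact ⟨fun h i => h i.1 i.2.1 i.2.2.1 i.2.2.2.1 i.2.2.2.2,
      fun h S h1 h2 h3 h4 => h ⟨S, h1, h2, h3, h4⟩⟩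
  have hHc : IsClosed (AuxHull x y) := by
    rw [hH]; exact isClosed_iInter fun i => i.2.1
  have hfin : ∀ u : Finset I, IsClosed (⋂ i ∈ u, i.1) ∧ IsPreconnected (⋂ i ∈ u, i.1) := by
    intro u
    induction u using Finset.induction_on with
    | empty => simpa using isPreconnected_univ
    | insert a s _ ih =>
      rw [Finset.set_biInter_insert]
      exact ⟨a.2.1.inter ih.1, hX _ _ a.2.1 a.2.2.1 ih.1 ih.2⟩
  rw [isPreconnected_closed_iff]
  intro t t' ht ht' hsub hP hQ
  by_contra hne
  rw [not_nonempty_iff_eq_empty] at hne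
  obtain ⟨O, O', hO, hO', hPO, hQO, hd⟩ := normal_separation
    (hHc.inter ht) (hHc.inter ht') (by
      rw [disjoint_iff_inter_eq_empty, ← inter_inter_distrib_left]; exact hne)
  have hex : ∃ u : Finset I, ¬ ((O ∪ O')ᶜ ∩ ⋂ i ∈ u, i.1).Nonempty := by
    by_contra! h
    obtain ⟨z, hz, hz'⟩ := ((hO.union hO').isClosed_compl.isCompact).inter_iInter_nonempty
      (fun i : I => i.1) (fun i => i.2.1) h
    rw [← hH] at hz'
    exact hz ((hsub hz').imp (fun h => hPO ⟨hz', h⟩) (fun h => hQO ⟨hz', h⟩))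
  obtain ⟨u, hu⟩ := hex
  have hHu : AuxHull x y ⊆ ⋂ i ∈ u, i.1 := by
    rw [hH]
    intro z hz
    simp only [mem_iInter] at hz ⊢
    exact fun i _ => hz i
  obtain ⟨p, hp, hp'⟩ := hP
  obtain ⟨q, hq, hq'⟩ := hQ
  obtain ⟨z, -, hz1, hz2⟩ := (hfin u).2 O O' hO hO' (by
      intro z hz
      by_contra h
      exact hu ⟨z, h, hz⟩)
    ⟨p, hHu hp, hPO ⟨hp, hp'⟩⟩ ⟨q, hHu hq, hQO ⟨hq, hq'⟩⟩
  exact disjoint_left.1 hd hz1 hz2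

theorem aux_compl_component {X : Type*} [TopologicalSpace X] [ConnectedSpace X]
    [LocallyConnectedSpace X] {D : Set X} (hDc : IsClosed D) (hD : IsConnected D) (a : X) :
    IsConnected (connectedComponentIn Dᶜ a)ᶜ := by
  have hDo := hDc.isOpen_compl
  obtain ⟨⟨d, hd⟩, hDp⟩ := hD
  have hDW : D ⊆ (connectedComponentIn Dᶜ a)ᶜ := fun z hz h => connectedComponentIn_subset _ _ h hz
  refine ⟨⟨d, hDW hd⟩, isPreconnected_of_forall d fun x hx => ?_⟩
  by_cases hxD : x ∈ D
  · exact ⟨D, hDW, hd, hxD, hDp⟩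
  set V := connectedComponentIn Dᶜ x with hV
  have hxV : x ∈ V := mem_connectedComponentIn hxD
  have hVo : IsOpen V := hDo.connectedComponentIn
  have hVp : IsPreconnected V := isPreconnected_connectedComponentIn
  have hdis : Disjoint V (connectedComponentIn Dᶜ a) := by
    rw [disjoint_left]
    intro z h1 h2
    apply hx
    rw [connectedComponentIn_eq h2, ← connectedComponentIn_eq h1]
    exact hxV
  have hcl : closure V ⊆ (connectedComponentIn Dᶜ a)ᶜ :=
    closure_minimal (disjoint_left.1 hdis) (hDo.connectedComponentIn).isClosed_compl
  have hmeet : (D ∩ closure V).Nonempty := by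
    by_contra h
    have h1 : closure V ⊆ Dᶜ := fun z hz hzD => h ⟨z, hzD, hz⟩
    have h2 : closure V ⊆ V :=
      hVp.closure.subset_connectedComponentIn (subset_closure hxV) h1
    have h3 : IsClopen V := ⟨isClosed_of_closure_subset h2, hVo⟩
    have h4 := h3.eq_univ ⟨x, hxV⟩
    exact connectedComponentIn_subset Dᶜ x (h4 ▸ mem_univ d : d ∈ V) hd
  exact ⟨D ∪ closure V, union_subset hDW hcl, Or.inl hd, Or.inr (subset_closure hxV),
    IsPreconnected.union' hmeet hDp hVp.closure⟩

/-- The pairs used in the Urysohn construction. -/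
def AuxP {X : Type*} [TopologicalSpace X] (c u : Set X) : Prop := IsConnected c ∧ IsConnected uᶜ

theorem aux_screen {X : Type*} [MetricSpace X] [ConnectedSpace X]
    [LocallyConnectedSpace X] {c u : Set X} (hc : IsClosed c) (hP : AuxP c u) (hu : IsOpen u)
    (hcu : c ⊆ u) : ∃ v : Set X, IsOpen v ∧ c ⊆ v ∧ closure v ⊆ u ∧ AuxP c v ∧
      AuxP (closure v) u := by
  obtain ⟨hc1, hu1⟩ := hP
  obtain ⟨a, ha⟩ := hc1.nonempty
  obtain ⟨b, hb⟩ := hu1.nonempty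
  obtain ⟨O, hO, hBO, hOc⟩ := normal_exists_closure_subset hu.isClosed_compl hc.isOpen_compl
    (compl_subset_compl.2 hcu)
  let N := connectedComponentIn O b
  have hNo : IsOpen N := hO.connectedComponentIn
  have hBN : uᶜ ⊆ N := hu1.isPreconnected.subset_connectedComponentIn hb hBO
  have hNc : IsConnected N := isConnected_connectedComponentIn_iff.2 (hBO hb)
  have hcN : c ⊆ (closure N)ᶜ := fun z hz h =>
    hOc (closure_mono (connectedComponentIn_subset _ _) h) hz
  let W := connectedComponentIn (closure N)ᶜ a
  have hWo : IsOpen W := isClosed_closure.isOpen_compl.connectedComponentIn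
  have hcW : c ⊆ W := hc1.isPreconnected.subset_connectedComponentIn ha hcN
  have hWc : IsConnected W := isConnected_connectedComponentIn_iff.2 (hcN ha)
  refine ⟨W, hWo, hcW, ?_, ⟨hc1, ?_⟩, ⟨hWc.closure, hu1⟩⟩
  · have : closure W ⊆ Nᶜ := closure_minimal (fun z hz h =>
      connectedComponentIn_subset _ _ hz (subset_closure h)) hNo.isClosed_compl
    exact this.trans (compl_subset_comm.1 hBN)
  · exact aux_compl_component isClosed_closure hNc.closure a

theorem aux_lim_between {X : Type*} [TopologicalSpace X] {x y z : X} (hz : z ∈ AuxHull x y)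
    (n : ℕ) : ∀ c : Urysohns.CU (AuxP (X := X)),
      c.lim z ≤ max (c.lim x) (c.lim y) + (1 / 2) ^ n ∧
      min (c.lim x) (c.lim y) - (1 / 2) ^ n ≤ c.lim z := by
  induction n with
  | zero =>
    intro c
    have h1 := c.lim_mem_Icc x
    have h2 := c.lim_mem_Icc y
    have h3 := c.lim_mem_Icc z
    simp only [mem_Icc] at h1 h2 h3
    have h4 := le_max_left (c.lim x) (c.lim y)
    have h5 := min_le_left (c.lim x) (c.lim y)
    rw [pow_zero]; constructor <;> linarith
  | succ n ih =>
    intro c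
    have hm : ∀ w, c.lim w = (c.left.lim w + c.right.lim w) / 2 := fun w => by
      rw [c.lim_eq_midpoint, midpoint_eq_smul_add, smul_eq_mul, invOf_eq_inv]; ring
    have hR : ∀ w, w ∈ c.right.C → c.right.lim w = 0 := fun w h => c.right.lim_of_mem_C w h
    have hL : ∀ w, w ∉ c.left.U → c.left.lim w = 1 := fun w h => c.left.lim_of_notMem_U w h
    have hLR : ∀ w, w ∉ c.right.C → w ∉ c.left.U := fun w h h' => h (c.left_U_subset_right_C h')
    have bL : ∀ w, 0 ≤ c.left.lim w ∧ c.left.lim w ≤ 1 := fun w => c.left.lim_mem_Icc w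
    have bR : ∀ w, 0 ≤ c.right.lim w ∧ c.right.lim w ≤ 1 := fun w => c.right.lim_mem_Icc w
    have dL : ∀ w, c.left.lim w = 1 ∨ c.right.lim w = 0 := by
      intro w
      by_cases h : w ∈ c.right.C
      · exact Or.inr (hR w h)
      · exact Or.inl (hL w (hLR w h))
    obtain ⟨l1, l2⟩ := ih c.left
    obtain ⟨r1, r2⟩ := ih c.right
    have hzR : x ∈ c.right.C → y ∈ c.right.C → z ∈ c.right.C :=
      hz _ c.right.closed_C c.right.P_C_U.1.isPreconnected
    have hzL : x ∉ c.left.U → y ∉ c.left.U → z ∉ c.left.U :=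
      hz _ c.left.open_U.isClosed_compl c.left.P_C_U.2.isPreconnected
    rw [hm x, hm y, hm z, pow_succ]
    have bLx := bL x
    have bLy := bL y
    have bLz := bL z
    have bRx := bR x
    have bRy := bR y
    have bRz := bR z
    have dx := dL x
    have dy := dL y
    constructor
    · by_cases h : x ∈ c.right.C ∧ y ∈ c.right.C
      · rw [hR x h.1, hR y h.2, hR z (hzR h.1 h.2)]
        rcases max_cases (c.left.lim x) (c.left.lim y) with h' | h' <;>
        rcases max_cases ((c.left.lim x + 0) / 2) ((c.left.lim y + 0) / 2) with h'' | h'' <;>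
        linarith
      · have h1 : c.left.lim x = 1 ∨ c.left.lim y = 1 := by
          by_cases h2 : x ∈ c.right.C
          · exact Or.inr (hL y (hLR y fun h3 => h ⟨h2, h3⟩))
          · exact Or.inl (hL x (hLR x h2))
        rcases max_cases (c.right.lim x) (c.right.lim y) with h' | h' <;>
        rcases max_cases ((c.left.lim x + c.right.lim x) / 2)
          ((c.left.lim y + c.right.lim y) / 2) with h'' | h'' <;>
        rcases h1 with h1 | h1 <;> rcases dx with dx | dx <;> rcases dy with dy | dy <;>
        linarith
    · by_cases h : x ∉ c.left.U ∧ y ∉ c.left.U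
      · rw [hL x h.1, hL y h.2, hL z (hzL h.1 h.2)]
        rcases min_cases (c.right.lim x) (c.right.lim y) with h' | h' <;>
        rcases min_cases ((1 + c.right.lim x) / 2) ((1 + c.right.lim y) / 2) with h'' | h'' <;>
        linarith
      · have h1 : c.right.lim x = 0 ∨ c.right.lim y = 0 := by
          by_cases h2 : x ∈ c.left.U
          · exact Or.inl (hR x (c.left_U_subset_right_C h2))
          · refine Or.inr (hR y (c.left_U_subset_right_C ?_))
            by_contra h3
            exact h ⟨h2, h3⟩
        rcases min_cases (c.left.lim x) (c.left.lim y) with h' | h' <;>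
        rcases min_cases ((c.left.lim x + c.right.lim x) / 2)
          ((c.left.lim y + c.right.lim y) / 2) with h'' | h'' <;>
        rcases h1 with h1 | h1 <;> rcases dx with dx | dx <;> rcases dy with dy | dy <;>
        linarith

/-- Functions monotone along hulls. -/
def AuxMono {X : Type*} [TopologicalSpace X] (f : X → Icc (0 : ℝ) 1) : Prop :=
  Continuous f ∧ ∀ x y, ∀ z ∈ AuxHull x y,
    (f z : ℝ) ≤ max (f x : ℝ) (f y) ∧ min (f x : ℝ) (f y) ≤ f z

theorem aux_exists_mono {X : Type*} [MetricSpace X] [ConnectedSpace X]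
    [LocallyConnectedSpace X] {x y : X} (hxy : x ≠ y) :
    ∃ f : X → Icc (0 : ℝ) 1, AuxMono f ∧ f x ≠ f y := by
  let c : Urysohns.CU (AuxP (X := X)) :=
    { C := {x}
      U := {y}ᶜ
      P_C_U := ⟨isConnected_singleton, by rw [compl_compl]; exact isConnected_singleton⟩
      closed_C := isClosed_singleton
      open_U := isOpen_compl_singleton
      subset := by exact singleton_subset_iff.2 (fun h => hxy (by simpa using h))
      hP := fun h1 h2 h3 h4 => aux_screen h1 h2 h3 h4 }
  have hlim : Filter.Tendsto (fun n : ℕ => (1 / 2 : ℝ) ^ n) Filter.atTop (nhds 0) :=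
    tendsto_pow_atTop_nhds_zero_of_lt_one (by norm_num) (by norm_num)
  refine ⟨fun w => ⟨c.lim w, c.lim_mem_Icc w⟩, ⟨?_, ?_⟩, ?_⟩
  · exact c.continuous_lim.subtype_mk _
  · intro a b w hw
    constructor
    · have h := hlim.const_add (max (c.lim a) (c.lim b))
      rw [add_zero] at h
      exact ge_of_tendsto' h fun n => (aux_lim_between hw n c).1
    · have h := hlim.const_sub (min (c.lim a) (c.lim b))
      rw [sub_zero] at h
      exact le_of_tendsto' h fun n => (aux_lim_between hw n c).2
  · intro h
    have h1 : c.lim x = c.lim y := congrArg Subtype.val h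
    rw [c.lim_of_mem_C x rfl, c.lim_of_notMem_U y (by simp [c])] at h1
    norm_num at h1

theorem aux_seq (X : Type*) [MetricSpace X] [CompactSpace X] [ConnectedSpace X]
    [LocallyConnectedSpace X] : ∃ φ : ℕ → X → Icc (0 : ℝ) 1, (∀ n, AuxMono (φ n)) ∧
      ∀ x y, x ≠ y → ∃ n, φ n x ≠ φ n y := by
  let I := {f : X → Icc (0 : ℝ) 1 // AuxMono f}
  obtain ⟨T, hT, hTU⟩ := TopologicalSpace.isOpen_iUnion_countable
    (fun f : I => {p : X × X | f.1 p.1 ≠ f.1 p.2})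
    (fun f => isOpen_ne_fun (f.2.1.comp continuous_fst) (f.2.1.comp continuous_snd))
  let f0 : I := ⟨fun _ => 0, continuous_const, by simp⟩
  obtain ⟨e, he⟩ := (hT.insert f0).exists_eq_range (insert_nonempty _ _)
  refine ⟨fun n => (e n).1, fun n => (e n).2, fun x y hxy => ?_⟩
  obtain ⟨f, hf, hfxy⟩ := aux_exists_mono hxy
  have : (x, y) ∈ ⋃ f : I, {p : X × X | f.1 p.1 ≠ f.1 p.2} := mem_iUnion.2 ⟨⟨f, hf⟩, hfxy⟩
  rw [← hTU] at this
  simp only [mem_iUnion] at this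
  obtain ⟨g, hg, hgxy⟩ := this
  obtain ⟨n, rfl⟩ : g ∈ range e := he ▸ mem_insert_of_mem _ hg
  exact ⟨n, hgxy⟩

/-- A weighted sum metric on the Hilbert cube. -/
noncomputable def auxD (u v : ℕ → Icc (0 : ℝ) 1) : ℝ :=
  ∑' n, (1 / 2 : ℝ) ^ n * |(u n : ℝ) - v n|

theorem auxD_bound (u v : ℕ → Icc (0 : ℝ) 1) (n : ℕ) :
    ‖(1 / 2 : ℝ) ^ n * |(u n : ℝ) - v n|‖ ≤ (1 / 2 : ℝ) ^ n := by
  rw [Real.norm_of_nonneg (by positivity)]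
  have h1 := (u n).2
  have h2 := (v n).2
  have : |(u n : ℝ) - v n| ≤ 1 := by
    rw [abs_le]; constructor <;> linarith [h1.1, h1.2, h2.1, h2.2]
  exact mul_le_of_le_one_right (by positivity) this

theorem auxD_summable (u v : ℕ → Icc (0 : ℝ) 1) :
    Summable fun n => (1 / 2 : ℝ) ^ n * |(u n : ℝ) - v n| :=
  Summable.of_norm_bounded summable_geometric_two (auxD_bound u v)

theorem auxD_continuous : Continuous fun p : (ℕ → Icc (0 : ℝ) 1) × (ℕ → Icc (0 : ℝ) 1) =>
    auxD p.1 p.2 := by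
  refine continuous_tsum (fun n => ?_) summable_geometric_two (fun n p => auxD_bound p.1 p.2 n)
  fun_prop

theorem auxD_nonneg (u v : ℕ → Icc (0 : ℝ) 1) : 0 ≤ auxD u v :=
  tsum_nonneg fun n => by positivity

theorem auxD_self (u : ℕ → Icc (0 : ℝ) 1) : auxD u u = 0 := by simp [auxD]

theorem auxD_comm (u v : ℕ → Icc (0 : ℝ) 1) : auxD u v = auxD v u := by
  simp only [auxD, abs_sub_comm]

theorem auxD_triangle (u v w : ℕ → Icc (0 : ℝ) 1) : auxD u w ≤ auxD u v + auxD v w := by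
  unfold auxD
  rw [← (auxD_summable u v).tsum_add (auxD_summable v w)]
  refine (auxD_summable u w).tsum_le_tsum (fun n => ?_) ((auxD_summable u v).add
    (auxD_summable v w))
  rw [← mul_add]
  gcongr
  exact abs_sub_le _ _ _

theorem auxD_coord (u v : ℕ → Icc (0 : ℝ) 1) (n : ℕ) :
    |(u n : ℝ) - v n| ≤ 2 ^ n * auxD u v := by
  have h := (auxD_summable u v).le_tsum n (fun j _ => by positivity)
  calc |(u n : ℝ) - v n| = 2 ^ n * ((1 / 2 : ℝ) ^ n * |(u n : ℝ) - v n|) := by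
        rw [← mul_assoc, ← mul_pow]; norm_num
    _ ≤ _ := by gcongr; exact h

theorem aux_retract (X : Type*) [MetricSpace X] [CompactSpace X] [ConnectedSpace X]
    [LocallyConnectedSpace X] (hX : AuxHU X) :
    ∃ (Φ : C(X, ℕ → Icc (0 : ℝ) 1)) (R : C(ℕ → Icc (0 : ℝ) 1, X)), ∀ x, R (Φ x) = x := by
  obtain ⟨φ, hφ, hsep⟩ := aux_seq X
  let Φ : X → ℕ → Icc (0 : ℝ) 1 := fun x n => φ n x
  have hΦ : Continuous Φ := continuous_pi fun n => (hφ n).1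
  have hinj : Function.Injective Φ := by
    intro x y h
    by_contra hne
    obtain ⟨n, hn⟩ := hsep x y hne
    exact hn (congrFun h n)
  have hemb : Topology.IsClosedEmbedding Φ := hΦ.isClosedEmbedding hinj
  let d : X → X → ℝ := fun x y => auxD (Φ x) (Φ y)
  have hdc : ∀ x, Continuous (d x) := fun x =>
    auxD_continuous.comp (continuous_const.prodMk hΦ)
  have hd0 : ∀ x y, d x y ≤ 0 → x = y := by
    intro x y h
    apply hinj
    funext n
    have h1 := auxD_coord (Φ x) (Φ y) n
    have h2 : (2 : ℝ) ^ n * auxD (Φ x) (Φ y) ≤ 0 := mul_nonpos_of_nonneg_of_nonpos (by positivity) h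
    have h3 := abs_nonpos_iff.1 (h1.trans h2)
    exact Subtype.ext (by linarith)
  have hadd : ∀ x y, ∀ z ∈ AuxHull x y, d x z + d z y = d x y := by
    intro x y z hz
    change auxD _ _ + auxD _ _ = auxD _ _
    unfold auxD
    rw [← (auxD_summable _ _).tsum_add (auxD_summable _ _)]
    congr 1
    funext n
    rw [← mul_add]
    congr 1
    obtain ⟨h1, h2⟩ := (hφ n).2 x y z hz
    change |(φ n x : ℝ) - φ n z| + |(φ n z : ℝ) - φ n y| = |(φ n x : ℝ) - φ n y|
    rcases le_total (φ n x : ℝ) (φ n y) with h | h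
    · rw [max_eq_right h] at h1
      rw [min_eq_left h] at h2
      rw [abs_of_nonpos (by linarith), abs_of_nonpos (by linarith), abs_of_nonpos (by linarith)]
      ring
    · rw [max_eq_left h] at h1
      rw [min_eq_right h] at h2
      rw [abs_of_nonneg (by linarith), abs_of_nonneg (by linarith), abs_of_nonneg (by linarith)]
      ring
  have hball : ∀ x r, 0 ≤ r → IsPreconnected {z | d x z ≤ r} := by
    intro x r hr
    have hx : x ∈ {z | d x z ≤ r} := by
      change auxD _ _ ≤ r
      rw [auxD_self]; exact hr
    refine isPreconnected_of_forall x fun z hz => ⟨AuxHull x z, fun w hw => ?_, aux_hull_left _ _,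
      aux_hull_right _ _, aux_hull_preconnected hX _ _⟩
    have h1 := hadd x z w hw
    have h2 : 0 ≤ d w z := auxD_nonneg _ _
    change d x w ≤ r
    change d x z ≤ r at hz
    linarith
  have hmeet : ∀ x y r s, 0 ≤ r → 0 ≤ s → d x y ≤ r + s → ∃ z, d x z ≤ r ∧ d y z ≤ s := by
    intro x y r s hr hs h
    by_cases hxy : d x y ≤ r
    · exact ⟨y, hxy, by change auxD _ _ ≤ s; rw [auxD_self]; exact hs⟩
    · have hIV := (aux_hull_preconnected hX x y).intermediate_value (aux_hull_left x y)
        (aux_hull_right x y) (hdc x).continuousOn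
      have hr' : r ∈ Icc (d x x) (d x y) := by
        refine ⟨?_, (not_le.1 hxy).le⟩
        change auxD _ _ ≤ r
        rw [auxD_self]; exact hr
      obtain ⟨z, hz, hzr⟩ := hIV hr'
      have h1 := hadd x y z hz
      refine ⟨z, hzr.le, ?_⟩
      change auxD _ _ ≤ s
      rw [auxD_comm]
      change d z y ≤ s
      linarith
  -- Zorn's lemma on graphs of nonexpansive partial maps
  let P : Set (Set ((ℕ → Icc (0 : ℝ) 1) × X)) :=
    {G | ∀ a ∈ G, ∀ b ∈ G, d a.2 b.2 ≤ auxD a.1 b.1}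
  obtain ⟨G, hG0, hGmax⟩ := zorn_subset_nonempty P (by
    intro C hCP hC _
    refine ⟨⋃₀ C, ?_, fun s hs => subset_sUnion_of_mem hs⟩
    rintro a ⟨s, hs, ha⟩ b ⟨t, ht, hb⟩
    rcases hC.total hs ht with h | h
    · exact hCP ht a (h ha) b hb
    · exact hCP hs a ha b (h hb)) (range fun x => (Φ x, x)) (by
    rintro _ ⟨x, rfl⟩ _ ⟨y, rfl⟩
    exact le_rfl)
  have hGP : G ∈ P := hGmax.prop
  have htot : ∀ u, ∃ x, (u, x) ∈ G := by
    intro u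
    obtain ⟨x, hx⟩ := aux_helly hX (fun a : G => {z | d a.1.2 z ≤ auxD a.1.1 u})
      (fun a => isClosed_le (hdc _) continuous_const)
      (fun a => hball _ _ (auxD_nonneg _ _))
      (fun a b => by
        obtain ⟨z, h1, h2⟩ := hmeet a.1.2 b.1.2 (auxD a.1.1 u) (auxD b.1.1 u) (auxD_nonneg _ _)
          (auxD_nonneg _ _) ((hGP _ a.2 _ b.2).trans (by
            rw [auxD_comm b.1.1 u]; exact auxD_triangle _ _ _))
        exact ⟨z, h1, h2⟩)
    refine ⟨x, ?_⟩
    have hins : insert (u, x) G ∈ P := by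
      rintro a (rfl | ha) b (rfl | hb)
      · change auxD _ _ ≤ auxD _ _
        rw [auxD_self, auxD_self]
      · change auxD _ _ ≤ auxD _ _
        rw [auxD_comm, auxD_comm u]; exact hx ⟨b, hb⟩
      · exact hx ⟨a, ha⟩
      · exact hGP a ha b hb
    exact hGmax.le_of_ge hins (subset_insert _ _) (mem_insert _ _)
  choose R hR using htot
  have hRc : Continuous R := by
    rw [hemb.isInducing.continuous_iff]
    refine continuous_pi fun n => ?_
    rw [continuous_induced_rng, continuous_iff_continuousAt]
    intro u
    rw [ContinuousAt, tendsto_iff_dist_tendsto_zero]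
    refine squeeze_zero (g := fun v => 2 ^ n * auxD v u) (fun _ => dist_nonneg) (fun v => ?_) ?_
    · refine (auxD_coord (Φ (R v)) (Φ (R u)) n).trans ?_
      gcongr
      exact hGP _ (hR v) _ (hR u)
    · have : Continuous fun v => 2 ^ n * auxD v u :=
        continuous_const.mul (auxD_continuous.comp (continuous_id.prodMk continuous_const))
      have h := this.tendsto u
      rwa [auxD_self, mul_zero] at h
  refine ⟨⟨Φ, hΦ⟩, ⟨R, hRc⟩, fun x => ?_⟩
  apply hd0
  have := hGP _ (hR (Φ x)) _ (hG0 ⟨x, rfl⟩)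
  simpa [auxD_self] using this

theorem aux_tietze : TietzeExtension.{0, 0} (Icc (0 : ℝ) 1) :=
  TietzeExtension.of_retract ⟨Subtype.val, continuous_subtype_val⟩
    ⟨projIcc 0 1 zero_le_one, continuous_projIcc⟩ (by
      ext x
      simp)
/-- A one-dimensional Peano continuum is an AR iff it is simply connected. -/
theorem stmt_13 {X : Type} [MetricSpace X] [CompactSpace X] [ConnectedSpace X]
    [LocallyConnectedSpace X] (hdim : CovDimLE X 1) :
    IsAR X ↔ SimplyConnectedSpace X := by
  constructor
  · intro hAR
    obtain ⟨x0⟩ : Nonempty X := inferInstance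
    let Z : Set (unitInterval × X) := {p | p.1 = 0 ∨ p.1 = 1}
    have hZ : IsClosed Z :=
      (isClosed_eq continuous_fst continuous_const).union
        (isClosed_eq continuous_fst continuous_const)
    have hf : Continuous (fun z : Z => if (z.1.1 : ℝ) ≤ 1 / 2 then z.1.2 else x0) := by
      refine Continuous.if_le (by fun_prop) (by fun_prop) (by fun_prop) (by fun_prop) ?_
      rintro ⟨⟨t, x⟩, h⟩ h2
      exfalso
      rcases h with h | h <;> simp only at h <;> subst h <;> norm_num at h2
    obtain ⟨g, hg⟩ := hAR (unitInterval × X) Z hZ ⟨_, hf⟩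
    have hcon : ContractibleSpace X := by
      refine (contractible_iff_id_nullhomotopic X).2 ⟨x0, ⟨⟨g, ?_, ?_⟩⟩⟩
      · intro x
        have := hg ⟨(0, x), Or.inl rfl⟩
        simpa using this
      · intro x
        have := hg ⟨(1, x), Or.inr rfl⟩
        have h2 : ¬ ((1 : ℝ) ≤ 2⁻¹) := by norm_num
        simpa [h2] using this
    infer_instance
  · intro hsc
    have hX : AuxHU X := fun A B hA hA' hB hB' => aux_unicoherent hdim hA' hB' hA hB
    obtain ⟨Φ, R, hR⟩ := aux_retract X hX
    intro Y _ Z hZ f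
    haveI := aux_tietze
    obtain ⟨g, hg⟩ := ContinuousMap.exists_restrict_eq hZ (Φ.comp f)
    refine ⟨R.comp g, fun z => ?_⟩
    have h : g z = Φ (f z) := DFunLike.congr_fun hg z
    change R (g z) = f z
    rw [h, hR]
end
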